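/- arXiv:2201.05582 — 2 statements merged into one kernel-verified Lean document; each statement's English description precedes it below -/
import Mathlib

section
/- Let μ satisfy Assumption 1 and let t > 1. Then there exists a finite Borel measure ν on ℝ such that ω_t(z) − z = −(t−1)·∫_ℝ x dμ(x) + ∫_ℝ 1/(x−z) dν(x) for all z ∈ ℂ⁺. Moreover ν(ℝ) = (t−1)·(∫_ℝ x² dμ(x) − (∫_ℝ x dμ(x))²) < ∞ and supp(ν) equals the support of the absolutely continuous part of μ^{⊞t}. -/
open MeasureTheory Topology Filter Set

noncomputable section

/-- The open upper half-plane ℂ⁺. -/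
def UHP : Set ℂ := {z : ℂ | 0 < z.im}

/-- The closed upper half-plane ℂ⁺ ∪ ℝ. -/
def CUHP : Set ℂ := {z : ℂ | 0 ≤ z.im}

/-- Cauchy–Stieltjes transform `m_μ(z) = ∫ 1/(x−z) dμ(x)`. -/
def stT (μ : Measure ℝ) (z : ℂ) : ℂ := ∫ x, ((x : ℂ) - z)⁻¹ ∂μ

/-- Real-valued Cauchy–Stieltjes transform at real points (outside the support). -/
def stTR (μ : Measure ℝ) (E : ℝ) : ℝ := ∫ x, (x - E)⁻¹ ∂μ

/-- Negative reciprocal Cauchy–Stieltjes transform `F_μ = −1/m_μ`. -/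
def nrT (μ : Measure ℝ) (z : ℂ) : ℂ := -(stT μ z)⁻¹

/-- Support of a Borel measure on ℝ (the smallest closed set of full measure). -/
def msupp (μ : Measure ℝ) : Set ℝ := {x : ℝ | ∀ ε > 0, 0 < μ (Set.Ioo (x - ε) (x + ε))}

/-- Absolutely continuous part of μ with respect to Lebesgue measure. -/
def acPart (μ : Measure ℝ) : Measure ℝ := volume.withDensity (μ.rnDeriv volume)

/-- `I_μ(ω) = ∫ 1/|x−ω|² dμ(x)`. -/
def Ifun (μ : Measure ℝ) (w : ℂ) : ℝ := ∫ x, (Complex.normSq ((x : ℂ) - w))⁻¹ ∂μ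

/-- A sequence of the upper half-plane converging non-tangentially to `E ∈ ℝ`. -/
def NonTangentialSeq (z : ℕ → ℂ) (E : ℝ) : Prop :=
  (∀ n, z n ∈ UHP) ∧ Tendsto z atTop (𝓝 (E : ℂ)) ∧
    ∃ C : ℝ, ∀ n, |(z n).re - E| ≤ C * (z n).im

/-- The density `ρ_μ` of the a.c. part of `μ` vanishes at `x`
(via the Stieltjes inversion formula). -/
def densityVanishesAt (μ : Measure ℝ) (x : ℝ) : Prop :=
  Tendsto (fun η : ℝ => (stT μ ((x : ℂ) + (η : ℂ) * Complex.I)).im) (𝓝[>] 0) (𝓝 0)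

/-- The density `ρ_μ` of the a.c. part of `μ` diverges at `x`. -/
def densityDivergesAt (μ : Measure ℝ) (x : ℝ) : Prop :=
  Tendsto (fun η : ℝ => (stT μ ((x : ℂ) + (η : ℂ) * Complex.I)).im) (𝓝[>] 0) atTop

/-- Assumption 1. -/
structure Assumption1 (μ : Measure ℝ) (nac npp nppout : ℕ)
    (Em Ep : Fin nac → ℝ) (atom : Fin npp → ℝ) (ρ : ℝ → ℝ) : Prop where
  prob : IsProbabilityMeasure μ
  compact : IsCompact (msupp μ)
  nac_pos : 1 ≤ nac
  npp_pos : 1 ≤ npp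
  ρ_nonneg : ∀ x, 0 ≤ ρ x
  ac_density : acPart μ = volume.withDensity fun x => ENNReal.ofReal (ρ x)
  sing_atomic : μ.singularPart volume = ∑ j : Fin npp, μ {atom j} • Measure.dirac (atom j)
  atom_inj : Function.Injective atom
  atom_pos : ∀ j, 0 < μ {atom j}
  lt : ∀ j, Em j < Ep j
  ordered : ∀ i j : Fin nac, i < j → Ep i < Em j
  supp_ac : msupp (acPart μ) = ⋃ j, Set.Icc (Em j) (Ep j)
  out_card : Nat.card {j : Fin npp // atom j ∉ msupp (acPart μ)} = nppout
  no_atom_endpoint : ∀ j i, atom j ≠ Em i ∧ atom j ≠ Ep i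
  power_law : ∀ j, ∃ tm tp C : ℝ, -1 < tm ∧ tm < 1 ∧ -1 < tp ∧ tp < 1 ∧ 1 ≤ C ∧
    ∀ᵐ x ∂volume, x ∈ Set.Icc (Em j) (Ep j) →
      C⁻¹ < ρ x / ((x - Em j) ^ tm * (Ep j - x) ^ tp) ∧
      ρ x / ((x - Em j) ^ tm * (Ep j - x) ^ tp) < C

/-- The subordination function `ω_t` for the free convolution semi-group,
together with its continuous extension to `ℂ⁺ ∪ ℝ`. -/
structure IsSubordT (μ : Measure ℝ) (t : ℝ) (ω : ℂ → ℂ) : Prop where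
  diff : DifferentiableOn ℂ ω UHP
  maps : ∀ z ∈ UHP, ω z ∈ UHP
  imLe : ∀ z ∈ UHP, z.im ≤ (ω z).im
  limTop : Tendsto (fun η : ℝ => ω ((η : ℂ) * Complex.I) / ((η : ℂ) * Complex.I))
      atTop (𝓝 1)
  eqn : ∀ z ∈ UHP, (t : ℂ) * ω z - z = ((t : ℂ) - 1) * nrT μ (ω z)
  cont : ContinuousOn ω CUHP

/-- `μt = μ^{⊞ t}`: the probability measure whose negative reciprocal Cauchy–Stieltjes
transform is `F_μ ∘ ω_t`, i.e. whose Cauchy–Stieltjes transform is `m_μ ∘ ω_t`. -/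
def IsFreePow (μ : Measure ℝ) (ω : ℂ → ℂ) (μt : Measure ℝ) : Prop :=
  IsProbabilityMeasure μt ∧ ∀ z ∈ UHP, stT μt z = stT μ (ω z)

/-- Assumption 2 (for one of the two measures). -/
structure Assumption2 (μ : Measure ℝ) (n : ℕ) (Am Ap : Fin n → ℝ) (ρ : ℝ → ℝ) : Prop where
  prob : IsProbabilityMeasure μ
  n_pos : 1 ≤ n
  centered : ∫ x, x ∂μ = 0
  ρ_nonneg : ∀ x, 0 ≤ ρ x
  ac : μ = volume.withDensity fun x => ENNReal.ofReal (ρ x)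
  lt : ∀ j, Am j < Ap j
  ordered : ∀ i j : Fin n, i < j → Ap i < Am j
  supp_eq : msupp μ = ⋃ j, Set.Icc (Am j) (Ap j)
  power_law : ∀ j, ∃ sm sp C : ℝ, -1 < sm ∧ sm < 1 ∧ -1 < sp ∧ sp < 1 ∧ 1 ≤ C ∧
    ∀ᵐ x ∂volume, x ∈ Set.Icc (Am j) (Ap j) →
      C⁻¹ < ρ x / ((x - Am j) ^ sm * (Ap j - x) ^ sp) ∧
      ρ x / ((x - Am j) ^ sm * (Ap j - x) ^ sp) < C

/-- The pair of subordination functions for the free additive convolution `μa ⊞ μb`. -/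
structure IsSubordPair (μa μb : Measure ℝ) (ωa ωb : ℂ → ℂ) : Prop where
  diff_a : DifferentiableOn ℂ ωa UHP
  diff_b : DifferentiableOn ℂ ωb UHP
  maps_a : ∀ z ∈ UHP, ωa z ∈ UHP
  maps_b : ∀ z ∈ UHP, ωb z ∈ UHP
  imLe_a : ∀ z ∈ UHP, z.im ≤ (ωa z).im
  imLe_b : ∀ z ∈ UHP, z.im ≤ (ωb z).im
  lim_a : Tendsto (fun η : ℝ => ωa ((η : ℂ) * Complex.I) / ((η : ℂ) * Complex.I))
      atTop (𝓝 1)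
  lim_b : Tendsto (fun η : ℝ => ωb ((η : ℂ) * Complex.I) / ((η : ℂ) * Complex.I))
      atTop (𝓝 1)
  eqn_a : ∀ z ∈ UHP, ωa z + ωb z - z = nrT μa (ωb z)
  eqn_b : ∀ z ∈ UHP, ωa z + ωb z - z = nrT μb (ωa z)

/-- `μab = μa ⊞ μb`: the probability measure whose negative reciprocal Cauchy–Stieltjes
transform is `F_{μa} ∘ ω_b`, i.e. whose Cauchy–Stieltjes transform is `m_{μa} ∘ ω_b`. -/
def IsFreeConv (μa μb : Measure ℝ) (ωb : ℂ → ℂ) (μab : Measure ℝ) : Prop :=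
  IsProbabilityMeasure μab ∧ ∀ z ∈ UHP, stT μab z = stT μa (ωb z)

/-- `Ω` is the continuous extension of `ω` to `ℂ⁺ ∪ ℝ`, with values in the
Riemann sphere `ℂ ∪ {∞}`. -/
def ExtendsToRP (ω : ℂ → ℂ) (Ω : ℂ → OnePoint ℂ) : Prop :=
  ContinuousOn Ω CUHP ∧ ∀ z ∈ UHP, Ω z = (ω z : OnePoint ℂ)

/-- `μhat` is the measure in the Nevanlinna representation
`F_μ(ω) − ω = −∫ x dμ + ∫ 1/(x−ω) dμ̂(x)`. -/
def IsNevanHat (μ μhat : Measure ℝ) : Prop :=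
  IsFiniteMeasure μhat ∧ ∀ z ∈ UHP,
    nrT μ z - z = -((∫ x, x ∂μ : ℝ) : ℂ) + ∫ x, ((x : ℂ) - z)⁻¹ ∂μhat

end

/-!
Write `m₁` and `Var` for the mean and the variance of `μ`. The subordination equation turns
`f(z) = ω(z) − z + (t−1) m₁` into `(t−1) (F_μ(w) − w + m₁)` at `w = ω(z)`. As `Im F_μ(w) / Im w` is
`1` plus the variance of `1/(x−w)` relative to `|m_μ(w)|²`, taking imaginary parts in the same
equation bounds `(t−1)` times this relative variance by `1` along `ω`, and Cauchy–Schwarz then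
bounds `f`. So `f` is bounded, continuous up to `ℝ` with `Im f = Im ω ≥ 0` there, and
`z f(z) → −(t−1) Var` along the imaginary axis: by the Poisson formula it is the Stieltjes transform
of `dν = π⁻¹ Im ω(x) dx`, of mass `(t−1) Var`.

For the supports, `m_{μt}(z) = −(t−1)/(t ω(z) − z)`, so by Stieltjes inversion `μt` has a density
that is positive where `Im ω > 0`, and no mass where `Im ω = 0` except at the zeros of `t ω(x) − x`.
On an interval with `ν = 0` the function `ω(x) − x` is real and nondecreasing, which leaves room for
one such zero; `μt` can only have an atom there.
-/

/-! ### The upper half-plane -/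

section HalfPlane

variable {w : ℂ}

lemma isOpen_UHP : IsOpen UHP := isOpen_lt continuous_const Complex.continuous_im

lemma UHP_subset_CUHP : UHP ⊆ CUHP := ofPred_subset_ofPred.2 fun _ => le_of_lt

lemma closure_UHP : closure UHP = CUHP := Complex.closure_setOfPred_lt_im 0

lemma ofReal_mem_CUHP (x : ℝ) : (x : ℂ) ∈ CUHP := by simp [CUHP]

lemma add_mul_I_mem_UHP (x : ℝ) {η : ℝ} (hη : 0 < η) : (x : ℂ) + η * Complex.I ∈ UHP := by
  simpa [UHP] using hη

lemma mul_I_mem_UHP {η : ℝ} (hη : 0 < η) : (η : ℂ) * Complex.I ∈ UHP := by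
  simpa [UHP] using hη

lemma im_le_norm_ofReal_sub (x : ℝ) (w : ℂ) : w.im ≤ ‖(x : ℂ) - w‖ := by
  simpa using (le_abs_self w.im).trans (by simpa using Complex.abs_im_le_norm ((x : ℂ) - w))

lemma ofReal_sub_ne_zero (hw : w ∈ UHP) (x : ℝ) : (x : ℂ) - w ≠ 0 :=
  norm_pos_iff.1 (lt_of_lt_of_le hw (im_le_norm_ofReal_sub x w))

lemma tendsto_vertical_of_continuousOn {E : Type*} [TopologicalSpace E] {f : ℂ → E}
    (hf : ContinuousOn f CUHP) (x : ℝ) :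
    Tendsto (fun η : ℝ => f (x + η * Complex.I)) (𝓝[>] 0) (𝓝 (f x)) := by
  refine (hf x (ofReal_mem_CUHP x)).tendsto.comp (tendsto_nhdsWithin_iff.2 ⟨?_, ?_⟩)
  · have : Continuous fun η : ℝ => (x : ℂ) + η * Complex.I := by fun_prop
    simpa using (this.tendsto 0).mono_left nhdsWithin_le_nhds
  · filter_upwards [self_mem_nhdsWithin] with η hη
    exact UHP_subset_CUHP (add_mul_I_mem_UHP x hη)

lemma continuous_comp_ofReal_of_continuousOn {E : Type*} [TopologicalSpace E] {f : ℂ → E}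
    (hf : ContinuousOn f CUHP) : Continuous fun x : ℝ => f x :=
  hf.comp_continuous Complex.continuous_ofReal ofReal_mem_CUHP

end HalfPlane

/-! ### Supports -/

lemma msupp_eq_support (μ : Measure ℝ) : msupp μ = μ.support := by
  ext x
  rw [(nhds_basis_Ioo_pos x).mem_measureSupport]
  rfl

lemma memLp_of_isCompact_msupp {μ : Measure ℝ} [IsFiniteMeasure μ] (hμ : IsCompact (msupp μ))
    (p : ENNReal) : MemLp id p μ := by
  obtain ⟨R, hR⟩ := hμ.isBounded.exists_norm_le
  rw [msupp_eq_support] at hR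
  exact MemLp.of_bound (by fun_prop) R (Eventually.mono Measure.support_mem_ae hR)

lemma msupp_eq_of_measure_Ioo_eq_zero_iff {μ ν : Measure ℝ}
    (h : ∀ a b, μ (Ioo a b) = 0 ↔ ν (Ioo a b) = 0) : msupp μ = msupp ν := by
  simp only [msupp, pos_iff_ne_zero, ne_eq, h]

/-! ### The Stieltjes transform -/

section StieltjesTransform

variable {μ : Measure ℝ} {w : ℂ}

lemma norm_inv_ofReal_sub_le (hw : w ∈ UHP) (x : ℝ) : ‖((x : ℂ) - w)⁻¹‖ ≤ w.im⁻¹ := by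
  rw [norm_inv]
  exact inv_anti₀ hw (im_le_norm_ofReal_sub x w)

lemma continuous_inv_ofReal_sub (hw : w ∈ UHP) : Continuous fun x : ℝ => ((x : ℂ) - w)⁻¹ :=
  Continuous.inv₀ (by fun_prop) (ofReal_sub_ne_zero hw)

lemma integrable_inv_ofReal_sub [IsFiniteMeasure μ] (hw : w ∈ UHP) :
    Integrable (fun x : ℝ => ((x : ℂ) - w)⁻¹) μ :=
  .of_bound (continuous_inv_ofReal_sub hw).aestronglyMeasurable w.im⁻¹
    (.of_forall (norm_inv_ofReal_sub_le hw))

lemma inv_normSq_ofReal_sub_eq (x : ℝ) (w : ℂ) :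
    (Complex.normSq ((x : ℂ) - w))⁻¹ = ‖((x : ℂ) - w)⁻¹‖ ^ 2 := by
  rw [Complex.normSq_eq_norm_sq, norm_inv, inv_pow]

lemma integrable_inv_normSq [IsFiniteMeasure μ] (hw : w ∈ UHP) :
    Integrable (fun x : ℝ => (Complex.normSq ((x : ℂ) - w))⁻¹) μ := by
  simp only [inv_normSq_ofReal_sub_eq]
  refine .of_bound ((continuous_inv_ofReal_sub hw).norm.pow 2).aestronglyMeasurable (w.im⁻¹ ^ 2)
    (.of_forall fun x => ?_)
  rw [norm_pow, norm_norm]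
  gcongr
  exact norm_inv_ofReal_sub_le hw x

lemma stT_im [IsFiniteMeasure μ] (hw : w ∈ UHP) : (stT μ w).im = w.im * Ifun μ w := by
  rw [stT, ← RCLike.im_to_complex, ← integral_im (integrable_inv_ofReal_sub hw), Ifun,
    ← integral_const_mul]
  simp [div_eq_mul_inv]

lemma Ifun_pos [IsFiniteMeasure μ] [NeZero μ] (hw : w ∈ UHP) : 0 < Ifun μ w := by
  have hpos (x : ℝ) : 0 < (Complex.normSq ((x : ℂ) - w))⁻¹ :=
    inv_pos.2 (Complex.normSq_pos.2 (ofReal_sub_ne_zero hw x))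
  rw [Ifun, integral_pos_iff_support_of_nonneg (fun x => (hpos x).le) (integrable_inv_normSq hw),
    eq_univ_of_forall fun x => Function.mem_support.2 (hpos x).ne']
  exact Measure.measure_univ_pos.2 (NeZero.ne μ)

lemma stT_im_pos [IsFiniteMeasure μ] [NeZero μ] (hw : w ∈ UHP) : 0 < (stT μ w).im := by
  rw [stT_im hw]
  exact mul_pos hw (Ifun_pos hw)

lemma stT_ne_zero [IsFiniteMeasure μ] [NeZero μ] (hw : w ∈ UHP) : stT μ w ≠ 0 := fun h => by
  simpa [h] using stT_im_pos (μ := μ) hw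

lemma analyticOnNhd_stT [IsFiniteMeasure μ] : AnalyticOnNhd ℂ (stT μ) UHP := by
  have hUHP : UHP ⊆ (algebraMap ℝ ℂ '' μ.support)ᶜ := by
    rintro _ hz ⟨x, -, rfl⟩
    simp [UHP] at hz
  have hstT : stT μ = resolventTransform μ := by
    ext z
    simp [stT, resolventTransform_apply, resolvent]
  rw [← isOpen_UHP.analyticOn_iff_analyticOnNhd, hstT]
  exact analyticOn_resolventTransform.mono hUHP

end StieltjesTransform

/-! ### Stieltjes inversion -/

section Inversion

lemma normSq_ofReal_sub_add_mul_I (x η y : ℝ) :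
    Complex.normSq ((y : ℂ) - (x + η * Complex.I)) = (y - x) ^ 2 + η ^ 2 := by
  simp [Complex.normSq_apply, sq]

lemma measure_closedBall_le_Ifun {μ : Measure ℝ} {x η : ℝ} (hη : 0 < η)
    (hμ : Integrable (fun y : ℝ => (Complex.normSq ((y : ℂ) - (x + η * Complex.I)))⁻¹) μ) :
    μ (Metric.closedBall x η) ≤ ENNReal.ofReal (2 * η * (η * Ifun μ (x + η * Complex.I))) := by
  set S : Set ℝ := {y | (2 * η ^ 2)⁻¹ ≤ (Complex.normSq ((y : ℂ) - (x + η * Complex.I)))⁻¹}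
  have hsub : Metric.closedBall x η ⊆ S := fun y hy => by
    rw [Metric.mem_closedBall, Real.dist_eq] at hy
    have hsq : (y - x) ^ 2 ≤ η ^ 2 := sq_le_sq' (by linarith [abs_le.1 hy]) (abs_le.1 hy).2
    simp only [S, mem_ofPred_eq, normSq_ofReal_sub_add_mul_I]
    gcongr
    linarith
  have hmarkov := mul_meas_ge_le_integral_of_nonneg
    (.of_forall fun y => inv_nonneg.2 (Complex.normSq_nonneg _)) hμ (2 * η ^ 2)⁻¹
  have hfin : μ S ≠ ⊤ := (hμ.measure_ge_lt_top (by positivity)).ne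
  rw [inv_mul_le_iff₀ (by positivity), ← Ifun] at hmarkov
  calc μ (Metric.closedBall x η) ≤ μ S := measure_mono hsub
    _ = ENNReal.ofReal (μ.real S) := (ENNReal.ofReal_toReal hfin).symm
    _ ≤ _ := ENNReal.ofReal_le_ofReal (hmarkov.trans_eq (by ring))

variable {μ : Measure ℝ} [IsFiniteMeasure μ] {s : Set ℝ} {x : ℝ}

lemma stT_add_mul_I_im (x : ℝ) {η : ℝ} (hη : 0 < η) :
    (stT μ (x + η * Complex.I)).im = η * Ifun μ (x + η * Complex.I) := by
  simp [stT_im (add_mul_I_mem_UHP x hη)]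

lemma measure_le_of_eventually_stT_im_le {C : ℝ}
    (h : ∀ x ∈ s, ∀ᶠ η : ℝ in 𝓝[>] 0, (stT μ (x + η * Complex.I)).im ≤ C) :
    μ s ≤ ENNReal.ofReal C * volume s := by
  refine (Besicovitch.vitaliFamily μ).measure_le_of_frequently_le (ρ := μ)
    (C.toNNReal • (volume : Measure ℝ)) Measure.AbsolutelyContinuous.rfl s fun x hx => ?_
  refine (Besicovitch.tendsto_filterAt μ x).frequently (Eventually.frequently ?_)
  filter_upwards [h x hx, self_mem_nhdsWithin] with η hC hη
  rw [mem_Ioi] at hη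
  calc μ (Metric.closedBall x η) ≤ ENNReal.ofReal (2 * η * (η * Ifun μ (x + η * Complex.I))) :=
        measure_closedBall_le_Ifun hη (integrable_inv_normSq (add_mul_I_mem_UHP x hη))
    _ ≤ ENNReal.ofReal (C * (2 * η)) := by
        rw [← stT_add_mul_I_im x hη, mul_comm C]
        gcongr
    _ = (C.toNNReal • (volume : Measure ℝ)) (Metric.closedBall x η) := by
        rw [ENNReal.ofReal_mul' (by positivity), Measure.smul_apply, Real.volume_closedBall]
        rfl

lemma measure_eq_zero_of_volume_eq_zero_of_stT_im_bounded (hs : volume s = 0)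
    (h : ∀ x ∈ s, ∃ C, ∀ᶠ η : ℝ in 𝓝[>] 0, (stT μ (x + η * Complex.I)).im ≤ C) : μ s = 0 := by
  have hcover : s ⊆ ⋃ n : ℕ,
      {x ∈ s | ∀ᶠ η : ℝ in 𝓝[>] 0, (stT μ (x + η * Complex.I)).im ≤ n} := fun x hx => by
    obtain ⟨C, hC⟩ := h x hx
    obtain ⟨n, hn⟩ := exists_nat_ge C
    exact mem_iUnion.2 ⟨n, hx, hC.mono fun _ hη => hη.trans hn⟩
  refine measure_mono_null hcover (measure_iUnion_null fun n => ?_)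
  refine nonpos_iff_eq_zero.1 ((measure_le_of_eventually_stT_im_le fun x hx => hx.2).trans ?_)
  rw [measure_mono_null (sep_subset s _) hs, mul_zero]

lemma measure_eq_zero_of_tendsto_stT_im_zero
    (h : ∀ x ∈ s, Tendsto (fun η : ℝ => (stT μ (x + η * Complex.I)).im) (𝓝[>] 0) (𝓝 0)) :
    μ s = 0 := by
  refine measure_null_of_locally_null s fun x _ =>
    ⟨s ∩ Metric.ball x 1, inter_mem_nhdsWithin s (Metric.ball_mem_nhds x one_pos), ?_⟩
  have hfin : volume (s ∩ Metric.ball x 1) ≠ ⊤ :=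
    measure_ne_top_of_subset inter_subset_right measure_ball_lt_top.ne
  have hlim : Tendsto (fun C => ENNReal.ofReal C * volume (s ∩ Metric.ball x 1)) (𝓝[>] 0)
      (𝓝 0) := by
    have hofReal := (ENNReal.continuous_ofReal.tendsto 0).mono_left
      (nhdsWithin_le_nhds (s := Ioi 0))
    simpa using ENNReal.Tendsto.mul_const hofReal (.inr hfin)
  refine nonpos_iff_eq_zero.1 (ge_of_tendsto hlim ?_)
  filter_upwards [self_mem_nhdsWithin] with C hC
  exact measure_le_of_eventually_stT_im_le fun y hy => (h y hy.1).eventually_le_const hC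

lemma tendsto_stT_im_zero_of_measure_eq_zero (hs : s ∈ 𝓝 x) (h : μ s = 0) :
    Tendsto (fun η : ℝ => (stT μ (x + η * Complex.I)).im) (𝓝[>] 0) (𝓝 0) := by
  obtain ⟨δ, hδ, hball⟩ := Metric.mem_nhds_iff.1 hs
  have hIfun {η : ℝ} (hη : 0 < η) : Ifun μ (x + η * Complex.I) ≤ μ.real univ * (δ ^ 2)⁻¹ := by
    rw [← smul_eq_mul (μ.real univ), ← integral_const]
    refine integral_mono_ae (integrable_inv_normSq (add_mul_I_mem_UHP x hη))
      (integrable_const _) ?_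
    filter_upwards [measure_eq_zero_iff_ae_notMem.1 h] with y hy
    have hdist : δ ≤ |y - x| := not_lt.1 fun hlt => hy (hball hlt)
    have hsq : δ ^ 2 ≤ (y - x) ^ 2 := sq_abs (y - x) ▸ pow_le_pow_left₀ hδ.le hdist 2
    rw [normSq_ofReal_sub_add_mul_I]
    gcongr
    nlinarith
  have hlim : Tendsto (fun η : ℝ => η * (μ.real univ * (δ ^ 2)⁻¹)) (𝓝[>] 0) (𝓝 0) := by
    have h0 := (tendsto_id (x := 𝓝 (0 : ℝ))).mul_const (μ.real univ * (δ ^ 2)⁻¹)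
    rw [zero_mul] at h0
    exact h0.mono_left nhdsWithin_le_nhds
  refine tendsto_of_tendsto_of_tendsto_of_le_of_le' tendsto_const_nhds hlim ?_ ?_ <;>
    filter_upwards [self_mem_nhdsWithin] with η hη <;>
    rw [stT_add_mul_I_im x hη]
  · exact mul_nonneg (le_of_lt hη) (integral_nonneg fun _ => inv_nonneg.2 (Complex.normSq_nonneg _))
  · exact mul_le_mul_of_nonneg_left (hIfun hη) (le_of_lt hη)

end Inversion

/-! ### Asymptotics at infinity -/

section Infinity

/-- Approach to `∞` within the Stolz sector `‖w‖ ≤ K * w.im` of the upper half-plane. This is where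
the Stieltjes transform of a measure of unbounded support still has an expansion. -/
noncomputable def stolzAtInfty (K : ℝ) : Filter ℂ :=
  comap (‖·‖) atTop ⊓ 𝓟 {w | w ∈ UHP ∧ ‖w‖ ≤ K * w.im}

variable {ν : Measure ℝ} {K : ℝ}

instance : (stolzAtInfty K).IsCountablyGenerated := by
  unfold stolzAtInfty
  infer_instance

lemma stolzAtInfty_le_cobounded : stolzAtInfty K ≤ Bornology.cobounded ℂ :=
  inf_le_left.trans comap_norm_atTop.le

lemma eventually_mem_sector_stolzAtInfty :
    ∀ᶠ w in stolzAtInfty K, w ∈ UHP ∧ ‖w‖ ≤ K * w.im :=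
  mem_inf_of_right (mem_principal_self _)

lemma tendsto_stolzAtInfty {α : Type*} {l : Filter α} {u : α → ℂ}
    (hu : Tendsto (fun a => ‖u a‖) l atTop) (h : ∀ᶠ a in l, u a ∈ UHP ∧ ‖u a‖ ≤ K * (u a).im) :
    Tendsto u l (stolzAtInfty K) :=
  tendsto_inf.2 ⟨tendsto_comap_iff.2 hu, tendsto_principal.2 h⟩

lemma tendsto_mul_I_stolzAtInfty :
    Tendsto (fun η : ℝ => (η : ℂ) * Complex.I) atTop (stolzAtInfty 1) :=
  tendsto_stolzAtInfty (by simpa using tendsto_abs_atTop_atTop)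
    ((eventually_gt_atTop 0).mono fun η hη => ⟨mul_I_mem_UHP hη, by simp [abs_of_pos hη]⟩)

lemma tendsto_div_ofReal_sub_cobounded (x : ℝ) :
    Tendsto (fun w : ℂ => w / ((x : ℂ) - w)) (Bornology.cobounded ℂ) (𝓝 (-1)) := by
  have hlim : Tendsto (fun w : ℂ => ((x : ℂ) * w⁻¹ - 1)⁻¹) (Bornology.cobounded ℂ) (𝓝 (-1)) := by
    have h := ((tendsto_inv₀_cobounded.const_mul (x : ℂ)).sub_const 1).inv₀ (by simp)
    simpa only [mul_zero, zero_sub, inv_neg, inv_one] using h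
  refine hlim.congr' ?_
  filter_upwards [Bornology.eventually_ne_cobounded (0 : ℂ)] with w hw
  rw [← inv_div, sub_div, div_self hw, div_eq_mul_inv]

lemma norm_div_ofReal_sub_le {w : ℂ} (hw : w ∈ UHP) (hK : ‖w‖ ≤ K * w.im) (x : ℝ) :
    ‖w / ((x : ℂ) - w)‖ ≤ K := by
  have him : 0 < w.im := hw
  rw [div_eq_mul_inv, norm_mul]
  calc ‖w‖ * ‖((x : ℂ) - w)⁻¹‖ ≤ K * w.im * w.im⁻¹ :=
        mul_le_mul hK (norm_inv_ofReal_sub_le hw x) (norm_nonneg _) ((norm_nonneg _).trans hK)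
    _ = K := mul_inv_cancel_right₀ him.ne' K

lemma tendsto_integral_mul_div_ofReal_sub {g : ℝ → ℂ} (hg : Integrable g ν) :
    Tendsto (fun w : ℂ => ∫ x : ℝ, g x * (w / ((x : ℂ) - w)) ∂ν)
      (stolzAtInfty K) (𝓝 (-∫ x, g x ∂ν)) := by
  rw [← integral_neg]
  refine tendsto_integral_filter_of_dominated_convergence (fun x => ‖g x‖ * K) ?_ ?_
    (hg.norm.mul_const K) (.of_forall fun x => ?_)
  · exact .of_forall fun w =>
      hg.aestronglyMeasurable.mul (Measurable.aestronglyMeasurable (by fun_prop))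
  · filter_upwards [eventually_mem_sector_stolzAtInfty] with w hw
    refine .of_forall fun x => ?_
    rw [norm_mul]
    gcongr
    exact norm_div_ofReal_sub_le hw.1 hw.2 x
  · simpa using ((tendsto_div_ofReal_sub_cobounded x).const_mul (g x)).mono_left
      stolzAtInfty_le_cobounded

lemma tendsto_mul_stT_stolzAtInfty [IsFiniteMeasure ν] :
    Tendsto (fun w : ℂ => w * stT ν w) (stolzAtInfty K) (𝓝 (-(ν.real univ : ℂ))) := by
  have h := tendsto_integral_mul_div_ofReal_sub (K := K) (integrable_const (μ := ν) (1 : ℂ))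
  simpa [div_eq_mul_inv, integral_const_mul, stT, Measure.real] using h

lemma tendsto_zero_of_tendsto_mul_of_cobounded {α : Type*} {l : Filter α} {u f : α → ℂ} {c : ℂ}
    (hu : Tendsto u l (Bornology.cobounded ℂ)) (hf : Tendsto (fun a => u a * f a) l (𝓝 c)) :
    Tendsto f l (𝓝 0) := by
  have h := (tendsto_inv₀_cobounded.comp hu).mul hf
  rw [zero_mul] at h
  refine h.congr' ?_
  filter_upwards [hu (Bornology.eventually_ne_cobounded 0)] with a ha
  exact inv_mul_cancel_left₀ ha _

end Infinity

/-! ### The reciprocal Stieltjes transform -/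

section ReciprocalTransform

open ProbabilityTheory

/-- The variance of the normalised resolvent `x ↦ (x - w)⁻¹ / m_μ(w)`, a random variable of mean `1`
under `μ`. It measures how far `Im F_μ(w) / Im w` exceeds `1`. -/
noncomputable def resolventVar (μ : Measure ℝ) (w : ℂ) : ℝ :=
  ∫ x : ℝ, ‖((x : ℂ) - w)⁻¹ / stT μ w - 1‖ ^ 2 ∂μ

variable {μ : Measure ℝ} {w : ℂ}

lemma integrable_sq_norm_resolvent_sub_one [IsFiniteMeasure μ] (hw : w ∈ UHP) :
    Integrable (fun x : ℝ => ‖((x : ℂ) - w)⁻¹ / stT μ w - 1‖ ^ 2) μ := by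
  have hcont : Continuous fun x : ℝ => ((x : ℂ) - w)⁻¹ / stT μ w - 1 :=
    ((continuous_inv_ofReal_sub hw).div_const _).sub continuous_const
  refine .of_bound (hcont.norm.pow 2).aestronglyMeasurable ((w.im⁻¹ / ‖stT μ w‖ + 1) ^ 2)
    (.of_forall fun x => ?_)
  rw [norm_pow, norm_norm]
  gcongr
  refine (norm_sub_le _ _).trans ?_
  rw [norm_div, norm_one]
  gcongr
  exact norm_inv_ofReal_sub_le hw x

lemma ofReal_sub_mul_inv_ofReal_sub (hw : w ∈ UHP) (c : ℂ) (x : ℝ) :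
    ((x : ℂ) - c) * ((x : ℂ) - w)⁻¹ = 1 + (w - c) * ((x : ℂ) - w)⁻¹ := by
  have := ofReal_sub_ne_zero hw x
  field_simp
  ring

lemma integrable_sub_mul_inv [IsFiniteMeasure μ] (hw : w ∈ UHP) (c : ℂ) :
    Integrable (fun x : ℝ => ((x : ℂ) - c) * ((x : ℂ) - w)⁻¹) μ := by
  simp only [ofReal_sub_mul_inv_ofReal_sub hw]
  exact (integrable_const 1).add ((integrable_inv_ofReal_sub hw).const_mul _)

variable [IsProbabilityMeasure μ]

lemma resolventVar_eq (hw : w ∈ UHP) :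
    resolventVar μ w = Ifun μ w / Complex.normSq (stT μ w) - 1 := by
  have hexpand (x : ℝ) : ‖((x : ℂ) - w)⁻¹ / stT μ w - 1‖ ^ 2 =
      (Complex.normSq ((x : ℂ) - w))⁻¹ / Complex.normSq (stT μ w)
        - 2 * (((x : ℂ) - w)⁻¹ / stT μ w).re + 1 := by
    rw [← Complex.normSq_eq_norm_sq, Complex.normSq_sub]
    simp only [Complex.normSq_div, Complex.normSq_inv, map_one, mul_one]
    ring
  have hsq := (integrable_inv_normSq (μ := μ) hw).div_const (Complex.normSq (stT μ w))
  have hlin := (integrable_inv_ofReal_sub (μ := μ) hw).div_const (stT μ w)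
  have hlin_re : Integrable (fun x : ℝ => 2 * (((x : ℂ) - w)⁻¹ / stT μ w).re) μ :=
    hlin.re.const_mul 2
  have hmean : ∫ x : ℝ, (((x : ℂ) - w)⁻¹ / stT μ w).re ∂μ = 1 := by
    simp only [← RCLike.re_to_complex]
    rw [integral_re hlin, integral_div, ← stT, div_self (stT_ne_zero hw), RCLike.one_re]
  have hsum := hsq.sub hlin_re
  simp only [Pi.sub_def] at hsum
  simp only [resolventVar, hexpand]
  rw [integral_add hsum (integrable_const 1), integral_sub hsq hlin_re, integral_const_mul, hmean,
    integral_div, ← Ifun, integral_const, probReal_univ]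
  norm_num
  ring

lemma nrT_im (hw : w ∈ UHP) : (nrT μ w).im = w.im * (1 + resolventVar μ w) := by
  rw [nrT, Complex.neg_im, Complex.inv_im, stT_im hw, resolventVar_eq hw]
  ring

lemma nrT_sub_add_eq (hw : w ∈ UHP) (c : ℂ) :
    nrT μ w - w + c = -(∫ x : ℝ, ((x : ℂ) - c) * ((x : ℂ) - w)⁻¹ ∂μ) / stT μ w := by
  have hm := stT_ne_zero (μ := μ) hw
  simp only [ofReal_sub_mul_inv_ofReal_sub hw]
  rw [integral_add (integrable_const 1) ((integrable_inv_ofReal_sub hw).const_mul _),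
    integral_const_mul, ← stT, integral_const, probReal_univ, one_smul, nrT]
  field_simp
  ring

lemma integrable_ofReal_sub_mean (hμ : Integrable id μ) :
    Integrable (fun x : ℝ => (x : ℂ) - (∫ x, x ∂μ : ℝ)) μ :=
  hμ.ofReal.sub (integrable_const _)

lemma integral_ofReal_sub_mean (hμ : Integrable id μ) :
    ∫ x : ℝ, ((x : ℂ) - (∫ x, x ∂μ : ℝ)) ∂μ = 0 := by
  have hid : Integrable (fun x : ℝ => (x : ℂ)) μ := hμ.ofReal
  rw [integral_sub hid (integrable_const _), integral_complex_ofReal, integral_const,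
    probReal_univ, one_smul, sub_self]

lemma nrT_sub_add_mean_eq (hμ : Integrable id μ) (hw : w ∈ UHP) :
    nrT μ w - w + (∫ x, x ∂μ : ℝ) =
      -∫ x : ℝ, ((x : ℂ) - (∫ x, x ∂μ : ℝ)) * (((x : ℂ) - w)⁻¹ / stT μ w - 1) ∂μ := by
  simp only [mul_sub, ← mul_div_assoc, mul_one]
  rw [integral_sub ((integrable_sub_mul_inv hw _).div_const _) (integrable_ofReal_sub_mean hμ),
    integral_ofReal_sub_mean hμ, integral_div, sub_zero, nrT_sub_add_eq hw, neg_div]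

lemma norm_nrT_sub_add_mean_le (hμ : MemLp id 2 μ) (hw : w ∈ UHP) :
    ‖nrT μ w - w + (∫ x, x ∂μ : ℝ)‖ ≤ Var[id; μ] + resolventVar μ w := by
  set m₁ : ℝ := ∫ x, x ∂μ with hm₁
  have hcentered : Integrable (fun x : ℝ => (x - m₁) ^ 2) μ :=
    (hμ.sub (memLp_const m₁)).integrable_sq
  have hres := integrable_sq_norm_resolvent_sub_one (μ := μ) hw
  rw [nrT_sub_add_mean_eq (hμ.integrable one_le_two) hw, norm_neg,
    variance_eq_integral hμ.aemeasurable, resolventVar]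
  simp only [id_eq, ← hm₁]
  rw [← integral_add hcentered hres]
  refine norm_integral_le_of_norm_le (hcentered.add hres) (.of_forall fun x => ?_)
  rw [norm_mul, ← Complex.ofReal_sub, Complex.norm_real, ← sq_abs (x - m₁), Real.norm_eq_abs]
  nlinarith [two_mul_le_add_sq |x - m₁| ‖((x : ℂ) - w)⁻¹ / stT μ w - 1‖,
    sq_nonneg |x - m₁|, sq_nonneg ‖((x : ℂ) - w)⁻¹ / stT μ w - 1‖]

lemma mul_integral_sub_mean_mul_inv (hμ : Integrable id μ) (hw : w ∈ UHP) :
    w * ∫ x : ℝ, ((x : ℂ) - (∫ x, x ∂μ : ℝ)) * ((x : ℂ) - w)⁻¹ ∂μ =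
      ∫ x : ℝ, ((x * (x - ∫ x, x ∂μ) : ℝ) : ℂ) * ((x : ℂ) - w)⁻¹ ∂μ := by
  set m₁ : ℝ := ∫ x, x ∂μ
  have hsplit (x : ℝ) : ((x * (x - m₁) : ℝ) : ℂ) * ((x : ℂ) - w)⁻¹ =
      (x - m₁) + w * (((x : ℂ) - m₁) * ((x : ℂ) - w)⁻¹) := by
    have := ofReal_sub_ne_zero hw x
    push_cast
    field_simp
    ring
  simp only [hsplit]
  rw [integral_add (integrable_ofReal_sub_mean hμ) ((integrable_sub_mul_inv hw _).const_mul w),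
    integral_ofReal_sub_mean hμ, zero_add, integral_const_mul]

lemma integrable_mul_sub_mean (hμ : MemLp id 2 μ) :
    Integrable (fun x => x * (x - ∫ x, x ∂μ)) μ :=
  hμ.integrable_mul (hμ.sub (memLp_const _))

lemma integral_mul_sub_mean (hμ : MemLp id 2 μ) :
    ∫ x, x * (x - ∫ x, x ∂μ) ∂μ = Var[id; μ] := by
  have hsq : Integrable (fun x : ℝ => x ^ 2) μ := hμ.integrable_sq
  have hid : Integrable (fun x : ℝ => x) μ := hμ.integrable one_le_two
  simp only [variance_eq_sub hμ, mul_sub, ← sq, Pi.pow_apply, id_eq]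
  rw [integral_sub hsq (hid.mul_const _), integral_mul_const, sq (∫ x, x ∂μ)]

lemma tendsto_mul_nrT_sub_add_mean (hμ : MemLp id 2 μ) (K : ℝ) :
    Tendsto (fun w : ℂ => w * (nrT μ w - w + (∫ x, x ∂μ : ℝ))) (stolzAtInfty K)
      (𝓝 (-(Var[id; μ] : ℂ))) := by
  have hnum := tendsto_integral_mul_div_ofReal_sub (K := K) (integrable_mul_sub_mean hμ).ofReal
  have hden := tendsto_mul_stT_stolzAtInfty (ν := μ) (K := K)
  have hquot := (hnum.div hden (by simp)).neg
  simp only [RCLike.ofReal_eq_complex_ofReal] at hquot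
  rw [integral_complex_ofReal, integral_mul_sub_mean hμ, probReal_univ, Complex.ofReal_one,
    neg_div_neg_eq, div_one] at hquot
  refine hquot.congr' ?_
  filter_upwards [eventually_mem_sector_stolzAtInfty] with w hsector
  have hw := hsector.1
  have hw0 : w ≠ 0 := by
    rintro rfl
    simp [UHP] at hw
  simp only [Pi.div_apply, div_eq_mul_inv w, mul_left_comm _ w, integral_const_mul]
  rw [← mul_integral_sub_mean_mul_inv (hμ.integrable one_le_two) hw, nrT_sub_add_eq hw,
    mul_div_mul_left _ _ hw0]
  ring

end ReciprocalTransform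

/-! ### The Poisson formula -/

section Poisson

variable {f h : ℂ → ℂ} {z ζ : ℂ} {C M R r s : ℝ}

lemma norm_horizontal_integral_le (hr : 0 < r) (hC : ∀ ζ ∈ CUHP, r ≤ ‖ζ‖ → ‖h ζ‖ ≤ C) :
    ‖∫ x : ℝ in (-r)..r, h (x + r * Complex.I)‖ ≤ C * (2 * r) := by
  refine (intervalIntegral.norm_integral_le_of_norm_le_const fun x _ => hC _ ?_ ?_).trans_eq ?_
  · exact UHP_subset_CUHP (add_mul_I_mem_UHP x hr)
  · simpa [abs_of_pos hr] using Complex.abs_im_le_norm ((x : ℂ) + r * Complex.I)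
  · rw [sub_neg_eq_add, ← two_mul, abs_of_pos (by positivity)]

lemma norm_vertical_integral_le (hr : 0 < r) (hs : |s| = r)
    (hC : ∀ ζ ∈ CUHP, r ≤ ‖ζ‖ → ‖h ζ‖ ≤ C) :
    ‖Complex.I • ∫ y : ℝ in (0 : ℝ)..r, h (s + y * Complex.I)‖ ≤ C * r := by
  rw [norm_smul, Complex.norm_I, one_mul]
  refine (intervalIntegral.norm_integral_le_of_norm_le_const fun y hy => hC _ ?_ ?_).trans_eq ?_
  · rw [uIoc_of_le hr.le] at hy
    exact UHP_subset_CUHP (add_mul_I_mem_UHP s hy.1)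
  · simpa [hs] using Complex.abs_re_le_norm ((s : ℂ) + y * Complex.I)
  · rw [sub_zero, abs_of_pos hr]

lemma norm_integral_le_of_norm_le (hc : ContinuousOn h CUHP) (hd : DifferentiableOn ℂ h UHP)
    (hr : 0 < r) (hC : ∀ ζ ∈ CUHP, r ≤ ‖ζ‖ → ‖h ζ‖ ≤ C) :
    ‖∫ x : ℝ in (-r)..r, h x‖ ≤ 4 * C * r := by
  have hclosed : uIcc (-r) r ×ℂ uIcc 0 r ⊆ CUHP := fun ζ hζ => by
    have him := hζ.2
    rw [uIcc_of_le hr.le] at him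
    exact him.1
  have hopen : Ioo (min (-r) r) (max (-r) r) ×ℂ Ioo (min 0 r) (max 0 r) ⊆ UHP := fun ζ hζ => by
    have him := hζ.2
    rw [min_eq_left hr.le] at him
    exact him.1
  have hcauchy := Complex.integral_boundary_rect_eq_zero_of_continuousOn_of_differentiableOn h
    ⟨-r, 0⟩ ⟨r, r⟩ (hc.mono hclosed) (hd.mono hopen)
  simp only [Complex.ofReal_zero, zero_mul, add_zero] at hcauchy
  have hbottom : ∫ x : ℝ in (-r)..r, h x = (∫ x : ℝ in (-r)..r, h (x + r * Complex.I))
      - Complex.I • (∫ y : ℝ in (0 : ℝ)..r, h (r + y * Complex.I))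
      + Complex.I • (∫ y : ℝ in (0 : ℝ)..r, h ((-r : ℝ) + y * Complex.I)) := by
    linear_combination hcauchy
  rw [hbottom]
  have htop := norm_horizontal_integral_le hr hC
  have hright := norm_vertical_integral_le hr (abs_of_pos hr) hC
  have hleft := norm_vertical_integral_le hr (by rw [abs_neg, abs_of_pos hr]) hC
  refine (norm_add_le _ _).trans ((add_le_add (norm_sub_le _ _) le_rfl).trans ?_)
  linarith

lemma tendsto_integral_zero_of_norm_le_div_sq (hc : ContinuousOn h CUHP)
    (hd : DifferentiableOn ℂ h UHP) (hC : 0 ≤ C)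
    (hb : ∀ ζ ∈ CUHP, R ≤ ‖ζ‖ → ‖h ζ‖ ≤ C / ‖ζ‖ ^ 2) :
    Tendsto (fun r : ℝ => ∫ x : ℝ in (-r)..r, h x) atTop (𝓝 0) := by
  have hlim : Tendsto (fun r : ℝ => 4 * C * r⁻¹) atTop (𝓝 0) := by
    simpa using tendsto_inv_atTop_zero.const_mul (4 * C)
  refine squeeze_zero_norm' ?_ hlim
  filter_upwards [eventually_ge_atTop R, eventually_gt_atTop 0] with r hR hr
  have hbr (ζ : ℂ) (hζ : ζ ∈ CUHP) (hrζ : r ≤ ‖ζ‖) : ‖h ζ‖ ≤ C / r ^ 2 :=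
    (hb ζ hζ (hR.trans hrζ)).trans (by gcongr)
  refine (norm_integral_le_of_norm_le hc hd hr hbr).trans_eq ?_
  field_simp

lemma sub_conj_ne_zero (hz : z ∈ UHP) (hζ : ζ ∈ CUHP) : ζ - (starRingEnd ℂ) z ≠ 0 := by
  intro h
  have him := congrArg Complex.im h
  simp only [Complex.sub_im, Complex.conj_im, sub_neg_eq_add, Complex.zero_im] at him
  exact (add_pos_of_nonneg_of_pos hζ hz).ne' him

lemma norm_dslope_div_sub_conj_le (hM : ∀ ζ ∈ CUHP, ‖f ζ‖ ≤ M) (hz : z ∈ UHP) (hζ : ζ ∈ CUHP)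
    (hzζ : 2 * ‖z‖ ≤ ‖ζ‖) :
    ‖dslope f z ζ / (ζ - (starRingEnd ℂ) z)‖ ≤ 8 * M / ‖ζ‖ ^ 2 := by
  have hz0 : 0 < ‖z‖ := norm_pos_iff.2 fun h => by simp [h, UHP] at hz
  have hζ0 : 0 < ‖ζ‖ := by linarith
  have hne : ζ ≠ z := fun h => by
    rw [h] at hzζ
    linarith
  have hnum : ‖f ζ - f z‖ ≤ 2 * M := by
    linarith [norm_sub_le (f ζ) (f z), hM ζ hζ, hM z (UHP_subset_CUHP hz)]
  have hden : ‖ζ‖ / 2 ≤ ‖ζ - z‖ := by linarith [norm_sub_norm_le ζ z]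
  have hden' : ‖ζ‖ / 2 ≤ ‖ζ - (starRingEnd ℂ) z‖ := by
    linarith [norm_sub_norm_le ζ ((starRingEnd ℂ) z), RCLike.norm_conj z]
  have hM0 : 0 ≤ M := (norm_nonneg _).trans (hM ζ hζ)
  rw [dslope_of_ne _ hne, slope_def_field, norm_div, norm_div]
  calc ‖f ζ - f z‖ / ‖ζ - z‖ / ‖ζ - (starRingEnd ℂ) z‖
      ≤ 2 * M / (‖ζ‖ / 2) / (‖ζ‖ / 2) := by gcongr
    _ = 8 * M / ‖ζ‖ ^ 2 := by
      field_simp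
      ring

lemma dslope_ofReal_div_sub_conj (hz : z ∈ UHP) (x : ℝ) :
    dslope f z x / ((x : ℂ) - (starRingEnd ℂ) z) =
      (f x - f z) * ((Complex.normSq ((x : ℂ) - z))⁻¹ : ℝ) := by
  have hconj : (x : ℂ) - (starRingEnd ℂ) z = (starRingEnd ℂ) ((x : ℂ) - z) := by simp
  rw [dslope_of_ne _ (sub_ne_zero.1 (ofReal_sub_ne_zero hz x)), slope_def_field, hconj, div_div,
    Complex.mul_conj, div_eq_mul_inv, Complex.ofReal_inv]

lemma integral_inv_normSq (hz : z ∈ UHP) :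
    ∫ x : ℝ, (Complex.normSq ((x : ℂ) - z))⁻¹ = Real.pi / z.im := by
  have him : 0 < z.im := hz
  have hpdf (x : ℝ) : (Complex.normSq ((x : ℂ) - z))⁻¹ =
      Real.pi / z.im * ProbabilityTheory.cauchyPDFReal z.re z.im.toNNReal x := by
    have hnormSq : (x - z.re) ^ 2 + z.im ^ 2 = Complex.normSq ((x : ℂ) - z) := by
      simp [Complex.normSq_apply, sq]
    rw [ProbabilityTheory.cauchyPDFReal_def, Real.coe_toNNReal _ him.le, hnormSq]
    field_simp
  simp only [hpdf, integral_const_mul]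
  rw [ProbabilityTheory.integral_cauchyPDFReal_eq_one _ (Real.toNNReal_pos.2 him).ne', mul_one]

lemma integrable_volume_inv_normSq (hz : z ∈ UHP) :
    Integrable (fun x : ℝ => (Complex.normSq ((x : ℂ) - z))⁻¹) :=
  .of_integral_ne_zero (by
    rw [integral_inv_normSq hz]
    exact (div_pos Real.pi_pos hz).ne')

lemma integrable_mul_inv_normSq (hf : ContinuousOn f CUHP) (hM : ∀ ζ ∈ CUHP, ‖f ζ‖ ≤ M)
    (hz : z ∈ UHP) :
    Integrable (fun x : ℝ => f x * ((Complex.normSq ((x : ℂ) - z))⁻¹ : ℝ)) :=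
  (integrable_volume_inv_normSq hz).ofReal.bdd_mul
    (continuous_comp_ofReal_of_continuousOn hf).aestronglyMeasurable
    (.of_forall fun x => hM x (ofReal_mem_CUHP x))

/- The Cauchy integral of `ζ ↦ (f ζ - f z) / ((ζ - z) (ζ - z̄))` over the real line vanishes, since
this function is `O(|ζ|⁻²)` on the closed half-plane. -/
lemma integral_mul_inv_normSq (hf : ContinuousOn f CUHP) (hd : DifferentiableOn ℂ f UHP)
    (hM : ∀ ζ ∈ CUHP, ‖f ζ‖ ≤ M) (hz : z ∈ UHP) :
    ∫ x : ℝ, f x * ((Complex.normSq ((x : ℂ) - z))⁻¹ : ℝ) = f z * (Real.pi / z.im : ℝ) := by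
  have hnhds : UHP ∈ 𝓝 z := isOpen_UHP.mem_nhds hz
  have hM0 : 0 ≤ M := (norm_nonneg _).trans (hM z (UHP_subset_CUHP hz))
  have hker (ζ : ℂ) (hζ : ζ ∈ CUHP) := sub_conj_ne_zero hz hζ
  have hcont : ContinuousOn (fun ζ => dslope f z ζ / (ζ - (starRingEnd ℂ) z)) CUHP :=
    ((continuousOn_dslope (mem_of_superset hnhds UHP_subset_CUHP)).2
      ⟨hf, hd.differentiableAt hnhds⟩).div (by fun_prop) hker
  have hdiff : DifferentiableOn ℂ (fun ζ => dslope f z ζ / (ζ - (starRingEnd ℂ) z)) UHP :=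
    ((Complex.differentiableOn_dslope hnhds).2 hd).div (by fun_prop)
      fun ζ hζ => hker ζ (UHP_subset_CUHP hζ)
  have hcauchy := tendsto_integral_zero_of_norm_le_div_sq hcont hdiff (by positivity)
    fun ζ hζ => norm_dslope_div_sub_conj_le hM hz hζ
  have hconst : Integrable (fun x : ℝ => f z * ((Complex.normSq ((x : ℂ) - z))⁻¹ : ℝ)) :=
    (integrable_volume_inv_normSq hz).ofReal.const_mul _
  have hint := integrable_mul_inv_normSq hf hM hz
  simp only [dslope_ofReal_div_sub_conj hz, sub_mul] at hcauchy
  have hzero := tendsto_nhds_unique (intervalIntegral_tendsto_integral (hint.sub hconst)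
    tendsto_neg_atTop_atBot tendsto_id) hcauchy
  simp only [Pi.sub_apply] at hzero
  rw [integral_sub hint hconst, integral_const_mul, integral_complex_ofReal,
    integral_inv_normSq hz] at hzero
  exact sub_eq_zero.1 hzero

end Poisson

/-! ### The Nevanlinna representation -/

section Nevanlinna

/-- The measure on `ℝ` with density `π⁻¹ Im f`, which represents a holomorphic function `f` on the
upper half-plane that is continuous up to the boundary. -/
noncomputable def boundaryMeasure (f : ℂ → ℂ) : Measure ℝ :=
  volume.withDensity fun x => ENNReal.ofReal ((f x).im / Real.pi)

variable {f : ℂ → ℂ} {M m : ℝ} {z : ℂ}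

lemma measurable_boundaryDensity (hf : ContinuousOn f CUHP) :
    Measurable fun x : ℝ => ENNReal.ofReal ((f x).im / Real.pi) := by
  have hcont := continuous_comp_ofReal_of_continuousOn hf
  exact ENNReal.measurable_ofReal.comp
    ((Complex.continuous_im.comp hcont).measurable.div_const Real.pi)

lemma integrable_inv_normSq_boundaryMeasure (hf : ContinuousOn f CUHP)
    (hM : ∀ ζ ∈ CUHP, ‖f ζ‖ ≤ M) (him : ∀ x : ℝ, 0 ≤ (f x).im) (hz : z ∈ UHP) :
    Integrable (fun x : ℝ => (Complex.normSq ((x : ℂ) - z))⁻¹) (boundaryMeasure f) := by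
  rw [boundaryMeasure, integrable_withDensity_iff (measurable_boundaryDensity hf)
    (.of_forall fun _ => ENNReal.ofReal_lt_top)]
  refine ((integrable_mul_inv_normSq hf hM hz).im.div_const Real.pi).congr (.of_forall fun x => ?_)
  simp only [ENNReal.toReal_ofReal (div_nonneg (him x) Real.pi_pos.le), RCLike.im_to_complex,
    Complex.im_mul_ofReal]
  ring

lemma im_mul_Ifun_boundaryMeasure (hf : ContinuousOn f CUHP) (hd : DifferentiableOn ℂ f UHP)
    (hM : ∀ ζ ∈ CUHP, ‖f ζ‖ ≤ M) (him : ∀ x : ℝ, 0 ≤ (f x).im) (hz : z ∈ UHP) :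
    z.im * Ifun (boundaryMeasure f) z = (f z).im := by
  have hz0 : z.im ≠ 0 := ne_of_gt hz
  have hpoisson := integral_im (integrable_mul_inv_normSq hf hM hz)
  rw [integral_mul_inv_normSq hf hd hM hz] at hpoisson
  simp only [RCLike.im_to_complex, Complex.im_mul_ofReal] at hpoisson
  rw [Ifun, boundaryMeasure, integral_withDensity_eq_integral_toReal_smul
    (measurable_boundaryDensity hf) (.of_forall fun _ => ENNReal.ofReal_lt_top)]
  simp only [ENNReal.toReal_ofReal (div_nonneg (him _) Real.pi_pos.le), smul_eq_mul,
    div_mul_eq_mul_div]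
  rw [integral_div, hpoisson]
  field_simp

lemma isFiniteMeasure_boundaryMeasure (hf : ContinuousOn f CUHP) (hd : DifferentiableOn ℂ f UHP)
    (hM : ∀ ζ ∈ CUHP, ‖f ζ‖ ≤ M) (him : ∀ x : ℝ, 0 ≤ (f x).im) {c : ℂ}
    (hlim : Tendsto (fun η : ℝ => (η * Complex.I) * f (η * Complex.I)) atTop (𝓝 c)) :
    IsFiniteMeasure (boundaryMeasure f) := by
  have hball : ∀ᶠ η : ℝ in atTop,
      boundaryMeasure f (Metric.closedBall 0 η) ≤ ENNReal.ofReal (2 * (‖c‖ + 1)) := by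
    filter_upwards [hlim.norm.eventually_le_const (lt_add_one ‖c‖), eventually_gt_atTop 0]
      with η hη hη0
    have hpos := mul_I_mem_UHP hη0
    have hIm := im_mul_Ifun_boundaryMeasure hf hd hM him hpos
    have hle := measure_closedBall_le_Ifun (x := 0) hη0 (by
      simpa using integrable_inv_normSq_boundaryMeasure hf hM him hpos)
    simp only [Complex.ofReal_zero, zero_add] at hle
    simp only [Complex.mul_I_im, Complex.ofReal_re] at hIm
    rw [hIm] at hle
    refine hle.trans (ENNReal.ofReal_le_ofReal ?_)
    rw [norm_mul, norm_mul, Complex.norm_I, mul_one, Complex.norm_real, Real.norm_of_nonneg hη0.le]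
      at hη
    nlinarith [Complex.im_le_norm (f (η * Complex.I))]
  have hunion : ⋃ η : ℝ, Metric.closedBall (0 : ℝ) η = univ :=
    eq_univ_of_forall fun x => mem_iUnion.2 ⟨dist x 0, Metric.mem_closedBall.2 le_rfl⟩
  have htendsto := tendsto_measure_iUnion_atTop (μ := boundaryMeasure f) (ι := ℝ)
    fun _ _ h => Metric.closedBall_subset_closedBall (x := (0 : ℝ)) h
  rw [hunion] at htendsto
  exact ⟨(le_of_tendsto htendsto hball).trans_lt ENNReal.ofReal_lt_top⟩

lemma isConnected_UHP : IsConnected UHP :=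
  ⟨⟨Complex.I, by simp [UHP]⟩, (convex_halfSpace_im_gt 0).isPreconnected⟩

lemma eq_of_im_eq_of_tendsto_sub {g : ℂ → ℂ} (hf : AnalyticOnNhd ℂ f UHP)
    (hg : AnalyticOnNhd ℂ g UHP) (him : ∀ z ∈ UHP, (f z).im = (g z).im)
    (hlim : Tendsto (fun η : ℝ => f (η * Complex.I) - g (η * Complex.I)) atTop (𝓝 0))
    (hz : z ∈ UHP) : f z = g z := by
  obtain ⟨c, hc⟩ := (hf.sub hg).eq_const_of_im_eq_const (c₀ := 0)
    (fun z hz => by simp [him z hz]) isOpen_UHP isConnected_UHP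
  have hc0 : c = 0 := by
    refine tendsto_nhds_unique (tendsto_const_nhds.congr' ?_) hlim
    filter_upwards [eventually_gt_atTop 0] with η hη
    exact (hc _ (mul_I_mem_UHP hη)).symm
  exact sub_eq_zero.1 ((hc z hz).trans hc0)

theorem eq_stT_boundaryMeasure (hf : ContinuousOn f CUHP) (hd : DifferentiableOn ℂ f UHP)
    (hM : ∀ ζ ∈ CUHP, ‖f ζ‖ ≤ M) (him : ∀ x : ℝ, 0 ≤ (f x).im) {c : ℂ}
    (hlim : Tendsto (fun η : ℝ => (η * Complex.I) * f (η * Complex.I)) atTop (𝓝 c))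
    (hz : z ∈ UHP) : f z = stT (boundaryMeasure f) z := by
  have := isFiniteMeasure_boundaryMeasure hf hd hM him hlim
  have hI := tendsto_mul_I_stolzAtInfty
  have hI' := hI.mono_right stolzAtInfty_le_cobounded
  have hf0 := tendsto_zero_of_tendsto_mul_of_cobounded hI' hlim
  have hst0 := tendsto_zero_of_tendsto_mul_of_cobounded hI'
    ((tendsto_mul_stT_stolzAtInfty (ν := boundaryMeasure f)).comp hI)
  refine eq_of_im_eq_of_tendsto_sub (hd.analyticOnNhd isOpen_UHP) analyticOnNhd_stT
    (fun z hz => ?_) (by simpa using hf0.sub hst0) hz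
  rw [stT_im hz, im_mul_Ifun_boundaryMeasure hf hd hM him hz]

lemma measureReal_univ_eq_of_tendsto {ν : Measure ℝ} [IsFiniteMeasure ν]
    (hlim : Tendsto (fun η : ℝ => (η * Complex.I) * stT ν (η * Complex.I)) atTop (𝓝 (-(m : ℂ)))) :
    ν.real univ = m := by
  have h := tendsto_nhds_unique (tendsto_mul_stT_stolzAtInfty.comp tendsto_mul_I_stolzAtInfty) hlim
  exact_mod_cast neg_injective h

end Nevanlinna

/-! ### The subordination function -/

section Subordination

open ProbabilityTheory

variable {μ : Measure ℝ} {t : ℝ} {ω : ℂ → ℂ} {z : ℂ}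

/-- The function `ω(z) − z + (t−1) ∫ x dμ`, whose Nevanlinna measure is the measure `ν` of the
theorem. -/
noncomputable def centeredShift (μ : Measure ℝ) (t : ℝ) (ω : ℂ → ℂ) (z : ℂ) : ℂ :=
  ω z - z + ((t - 1) * ∫ x, x ∂μ : ℝ)

lemma centeredShift_ofReal_im (x : ℝ) : (centeredShift μ t ω x).im = (ω x).im := by
  simp only [centeredShift, Complex.add_im, Complex.sub_im, Complex.ofReal_im, sub_zero, add_zero]

namespace IsSubordT

lemma continuousOn_centeredShift (hω : IsSubordT μ t ω) :
    ContinuousOn (centeredShift μ t ω) CUHP :=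
  (hω.cont.sub continuousOn_id).add continuousOn_const

lemma differentiableOn_centeredShift (hω : IsSubordT μ t ω) :
    DifferentiableOn ℂ (centeredShift μ t ω) UHP :=
  (hω.diff.sub differentiableOn_id).add_const _

lemma centeredShift_eq (hω : IsSubordT μ t ω) (hz : z ∈ UHP) :
    centeredShift μ t ω z = (t - 1 : ℝ) * (nrT μ (ω z) - ω z + (∫ x, x ∂μ : ℝ)) := by
  rw [centeredShift]
  push_cast
  linear_combination hω.eqn z hz

lemma im_nonneg (hω : IsSubordT μ t ω) (x : ℝ) : 0 ≤ (ω x).im := by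
  refine ge_of_tendsto ((Complex.continuous_im.tendsto _).comp
    (tendsto_vertical_of_continuousOn hω.cont x)) ?_
  filter_upwards [self_mem_nhdsWithin] with η hη
  exact (hω.maps _ (add_mul_I_mem_UHP x hη)).le

lemma tendsto_mul_I (hω : IsSubordT μ t ω) :
    Tendsto (fun η : ℝ => ω (η * Complex.I)) atTop (stolzAtInfty 2) := by
  have him : ∀ᶠ η : ℝ in atTop, η ≤ (ω (η * Complex.I)).im := by
    filter_upwards [eventually_gt_atTop 0] with η hη
    simpa using hω.imLe _ (mul_I_mem_UHP hη)
  refine tendsto_stolzAtInfty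
    (tendsto_atTop_mono' _ (him.mono fun η h => h.trans (Complex.im_le_norm _)) tendsto_id) ?_
  filter_upwards [him, eventually_gt_atTop 0,
    hω.limTop.norm.eventually_le_const (norm_one (α := ℂ).trans_lt one_lt_two)] with η hle hη hratio
  refine ⟨hω.maps _ (mul_I_mem_UHP hη), ?_⟩
  rw [norm_div, norm_mul, Complex.norm_I, mul_one, Complex.norm_real, Real.norm_of_nonneg hη.le,
    div_le_iff₀ hη] at hratio
  linarith

lemma centeredShift_im_nonneg (hω : IsSubordT μ t ω) (x : ℝ) :
    0 ≤ (centeredShift μ t ω x).im :=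
  (hω.im_nonneg x).trans_eq (centeredShift_ofReal_im x).symm

variable [IsProbabilityMeasure μ]

lemma im_eq (hω : IsSubordT μ t ω) (hz : z ∈ UHP) :
    z.im = (ω z).im * (1 - (t - 1) * resolventVar μ (ω z)) := by
  have h := congrArg Complex.im (hω.eqn z hz)
  rw [← Complex.ofReal_one, ← Complex.ofReal_sub, Complex.im_ofReal_mul, nrT_im (hω.maps z hz),
    Complex.sub_im, Complex.im_ofReal_mul] at h
  linarith

lemma mul_resolventVar_le_one (hω : IsSubordT μ t ω) (hz : z ∈ UHP) :
    (t - 1) * resolventVar μ (ω z) ≤ 1 := by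
  have hpos : 0 < (ω z).im * (1 - (t - 1) * resolventVar μ (ω z)) := hω.im_eq hz ▸ hz
  exact (sub_pos.1 (pos_of_mul_pos_right hpos (hω.maps z hz).le)).le

lemma norm_centeredShift_le (hω : IsSubordT μ t ω) (hμ : MemLp id 2 μ) (ht : 1 ≤ t)
    (hz : z ∈ CUHP) : ‖centeredShift μ t ω z‖ ≤ (t - 1) * Var[id; μ] + 1 := by
  rw [← closure_UHP] at hz
  refine le_on_closure (f := fun z => ‖centeredShift μ t ω z‖) (fun w hw => ?_)
    (closure_UHP ▸ hω.continuousOn_centeredShift.norm) continuousOn_const hz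
  have hnr := norm_nrT_sub_add_mean_le hμ (hω.maps w hw)
  have hres := hω.mul_resolventVar_le_one hw
  rw [hω.centeredShift_eq hw, norm_mul, Complex.norm_real, Real.norm_of_nonneg (by linarith)]
  nlinarith

lemma tendsto_mul_centeredShift (hω : IsSubordT μ t ω) (hμ : MemLp id 2 μ) :
    Tendsto (fun η : ℝ => (η * Complex.I) * centeredShift μ t ω (η * Complex.I)) atTop
      (𝓝 (-(((t - 1) * Var[id; μ] : ℝ) : ℂ))) := by
  have hinv := hω.limTop.inv₀ one_ne_zero
  have h := hinv.mul ((tendsto_mul_nrT_sub_add_mean hμ 2).comp hω.tendsto_mul_I)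
  convert (h.const_mul ((t - 1 : ℝ) : ℂ)).congr' ?_ using 2
  · push_cast; ring
  · filter_upwards [eventually_gt_atTop 0] with η hη
    have hz := mul_I_mem_UHP hη
    have hω0 : ω (η * Complex.I) ≠ 0 := fun h0 => by
      simpa [UHP, h0] using hω.maps _ hz
    rw [hω.centeredShift_eq hz, inv_div, Function.comp_apply]
    field_simp

end IsSubordT

end Subordination

/-! ### The support of the Nevanlinna measure -/

section Support

lemma boundaryMeasure_eq_zero_iff {f : ℂ → ℂ} (hf : ContinuousOn f CUHP)
    (him : ∀ x : ℝ, 0 ≤ (f x).im) {U : Set ℝ} (hU : IsOpen U) :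
    boundaryMeasure f U = 0 ↔ ∀ x ∈ U, (f x).im = 0 := by
  have hcont : Continuous fun x : ℝ => (f x).im :=
    Complex.continuous_im.comp (continuous_comp_ofReal_of_continuousOn hf)
  have hdensity (x : ℝ) : ENNReal.ofReal ((f x).im / Real.pi) = 0 ↔ (f x).im = 0 := by
    rw [ENNReal.ofReal_eq_zero, div_le_iff₀ Real.pi_pos, zero_mul, (him x).ge_iff_eq']
  rw [boundaryMeasure, withDensity_apply _ hU.measurableSet,
    lintegral_eq_zero_iff (measurable_boundaryDensity hf)]
  refine ⟨fun h => ?_, fun h => ?_⟩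
  · exact Measure.eqOn_open_of_ae_eq (h.mono fun x hx => (hdensity x).1 hx) hU hcont.continuousOn
      continuousOn_const
  · exact (ae_restrict_mem hU.measurableSet).mono fun x hx => (hdensity x).2 (h x hx)

lemma measure_eq_zero_of_acPart_eq_zero {μ : Measure ℝ} [SigmaFinite μ] {s : Set ℝ}
    (h : ∀ N ⊆ s, volume N = 0 → μ N = 0) (hs : acPart μ s = 0) : μ s = 0 := by
  obtain ⟨N, -, hsing, hvol⟩ := Measure.mutuallySingular_singularPart μ volume
  have hdiff : μ (s \ N) = 0 :=
    h _ sdiff_subset (measure_mono_null (fun _ hx => hx.2) hvol)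
  have hsing_s : μ.singularPart volume s = 0 := by
    rw [← inter_union_sdiff s N]
    exact measure_union_null (measure_mono_null inter_subset_right hsing)
      (Measure.absolutelyContinuous_of_le (Measure.singularPart_le μ volume) hdiff)
  rw [Measure.haveLebesgueDecomposition_add μ volume, Measure.add_apply, hsing_s, zero_add]
  exact hs

lemma re_stT_le_re_stT {ν : Measure ℝ} [IsFiniteMeasure ν] {a b x y η : ℝ} (h : ν (Ioo a b) = 0)
    (hη : 0 < η) (hax : a + η ≤ x) (hxy : x ≤ y) (hyb : y + η ≤ b) :
    (stT ν (x + η * Complex.I)).re ≤ (stT ν (y + η * Complex.I)).re := by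
  have hint (r : ℝ) := integrable_inv_ofReal_sub (μ := ν) (add_mul_I_mem_UHP r hη)
  have hre (r : ℝ) : (stT ν (r + η * Complex.I)).re =
      ∫ s : ℝ, (s - r) / ((s - r) ^ 2 + η ^ 2) ∂ν := by
    rw [stT, ← RCLike.re_to_complex, ← integral_re (hint r)]
    simp [normSq_ofReal_sub_add_mul_I]
  have hint_re (r : ℝ) : Integrable (fun s : ℝ => (s - r) / ((s - r) ^ 2 + η ^ 2)) ν :=
    (hint r).re.congr (.of_forall fun s => by
      simp [normSq_ofReal_sub_add_mul_I])
  rw [hre, hre]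
  refine integral_mono_ae (hint_re x) (hint_re y) ?_
  filter_upwards [measure_eq_zero_iff_ae_notMem.1 h] with s hs
  have hprod : η ^ 2 ≤ (s - x) * (s - y) := by
    rcases le_or_gt s a with hsa | hsa
    · nlinarith
    · have hbs : b ≤ s := not_lt.1 fun hsb => hs ⟨hsa, hsb⟩
      nlinarith
  rw [div_le_div_iff₀ (by positivity) (by positivity)]
  nlinarith [mul_nonneg (sub_nonneg.2 hxy) (sub_nonneg.2 hprod)]

variable {μ μt ν : Measure ℝ} {t a b x y : ℝ} {ω : ℂ → ℂ} {z : ℂ}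

namespace IsSubordT

lemma sub_le_re_sub_of_measure_Ioo_eq_zero [IsFiniteMeasure ν] (hω : IsSubordT μ t ω)
    (hν : ∀ z ∈ UHP, centeredShift μ t ω z = stT ν z) (h : ν (Ioo a b) = 0)
    (hx : x ∈ Ioo a b) (hy : y ∈ Ioo a b) (hxy : x ≤ y) : y - x ≤ (ω y).re - (ω x).re := by
  have hre (r η : ℝ) : (centeredShift μ t ω (r + η * Complex.I)).re =
      (ω (r + η * Complex.I)).re - r + (t - 1) * ∫ x, x ∂μ := by
    simp [centeredShift]
  have hlim (r : ℝ) := (Complex.continuous_re.tendsto _).comp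
    (tendsto_vertical_of_continuousOn hω.cont r)
  refine ge_of_tendsto ((hlim y).sub (hlim x)) ?_
  filter_upwards [self_mem_nhdsWithin, nhdsWithin_le_nhds
    (Iio_mem_nhds (lt_min (sub_pos.2 hx.1) (sub_pos.2 hy.2)))] with η hη hη_lt
  have hmin := lt_min_iff.1 (mem_Iio.1 hη_lt)
  have hmono := re_stT_le_re_stT h hη (by linarith) hxy (by linarith)
  rw [← hν _ (add_mul_I_mem_UHP x hη), ← hν _ (add_mul_I_mem_UHP y hη), hre, hre] at hmono
  simp only [Function.comp_apply]
  linarith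

lemma subsingleton_zeros_of_measure_Ioo_eq_zero [IsFiniteMeasure ν] (hω : IsSubordT μ t ω)
    (hν : ∀ z ∈ UHP, centeredShift μ t ω z = stT ν z) (ht : 1 < t) (h : ν (Ioo a b) = 0) :
    (Ioo a b ∩ {x : ℝ | (t : ℂ) * ω x - x = 0}).Subsingleton := by
  have hre {r : ℝ} (hr : (t : ℂ) * ω r - r = 0) : t * (ω r).re = r := by
    simpa [sub_eq_zero] using congrArg Complex.re hr
  have hle {x y : ℝ} (hx : x ∈ Ioo a b ∩ {x : ℝ | (t : ℂ) * ω x - x = 0})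
      (hy : y ∈ Ioo a b ∩ {x : ℝ | (t : ℂ) * ω x - x = 0}) : y ≤ x := by
    by_contra! hxy
    have hmono := hω.sub_le_re_sub_of_measure_Ioo_eq_zero hν h hx.1 hy.1 hxy.le
    nlinarith [hre hx.2, hre hy.2]
  exact fun x hx y hy => le_antisymm (hle hy hx) (hle hx hy)

end IsSubordT

namespace IsFreePow

variable [IsFiniteMeasure μ] [NeZero μ]

lemma stT_eq (hμt : IsFreePow μ ω μt) (hω : IsSubordT μ t ω) (ht : t ≠ 1) (hz : z ∈ UHP) :
    stT μt z = -((t - 1 : ℝ) / (t * ω z - z)) := by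
  have hm := stT_ne_zero (μ := μ) (hω.maps z hz)
  have : (t : ℂ) - 1 ≠ 0 := sub_ne_zero.2 (mod_cast ht)
  rw [hμt.2 z hz, hω.eqn z hz, nrT]
  push_cast
  field_simp

lemma tendsto_stT_im (hμt : IsFreePow μ ω μt) (hω : IsSubordT μ t ω) (ht : t ≠ 1)
    (hx : (t : ℂ) * ω x - x ≠ 0) :
    Tendsto (fun η : ℝ => (stT μt (x + η * Complex.I)).im) (𝓝[>] 0)
      (𝓝 ((t - 1) * (t * (ω x).im) / Complex.normSq (t * ω x - x))) := by
  have hden := tendsto_vertical_of_continuousOn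
    ((hω.cont.const_mul (t : ℂ)).sub continuousOn_id) x
  have hlim := (Complex.continuous_im.tendsto _).comp
    ((tendsto_const_nhds (x := ((t - 1 : ℝ) : ℂ))).div hden hx).neg
  have hval : (-((t - 1 : ℝ) / ((t : ℂ) * ω x - x))).im =
      (t - 1) * (t * (ω x).im) / Complex.normSq (t * ω x - x) := by
    rw [Complex.neg_im, div_eq_mul_inv, Complex.im_ofReal_mul, Complex.inv_im]
    simp
    ring
  rw [← hval]
  refine hlim.congr' ?_
  filter_upwards [self_mem_nhdsWithin] with η hη
  rw [hμt.stT_eq hω ht (add_mul_I_mem_UHP x hη)]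
  rfl

lemma im_eq_zero_of_acPart_eq_zero (hμt : IsFreePow μ ω μt) (hω : IsSubordT μ t ω) (ht : 1 < t)
    {U : Set ℝ} (hU : IsOpen U) (h : acPart μt U = 0) (hx : x ∈ U) : (ω x).im = 0 := by
  have := hμt.1
  set V : Set ℝ := U ∩ {y | 0 < (ω y).im}
  have hne {y : ℝ} (hy : 0 < (ω y).im) : (t : ℂ) * ω y - y ≠ 0 := fun h0 => by
    have him : t * (ω y).im = 0 := by simpa using congrArg Complex.im h0
    nlinarith
  have hVopen : IsOpen V := hU.inter (isOpen_lt continuous_const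
    (Complex.continuous_im.comp (continuous_comp_ofReal_of_continuousOn hω.cont)))
  have hV : μt V = 0 := measure_eq_zero_of_acPart_eq_zero
    (fun N hN hvol => measure_eq_zero_of_volume_eq_zero_of_stT_im_bounded hvol fun y hy =>
      ⟨_, (hμt.tendsto_stT_im hω ht.ne' (hne (hN hy).2)).eventually_le_const (lt_add_one _)⟩)
    (measure_mono_null inter_subset_left h)
  refine le_antisymm (not_lt.1 fun hpos => ?_) (hω.im_nonneg x)
  have hlim := tendsto_nhds_unique (hμt.tendsto_stT_im hω ht.ne' (hne hpos))
    (tendsto_stT_im_zero_of_measure_eq_zero (hVopen.mem_nhds ⟨hx, hpos⟩) hV)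
  have hnormSq := Complex.normSq_pos.2 (hne hpos)
  have := sub_pos.2 ht
  exact ne_of_gt (by positivity) hlim

lemma acPart_Ioo_eq_zero [IsFiniteMeasure ν] (hμt : IsFreePow μ ω μt) (hω : IsSubordT μ t ω)
    (ht : 1 < t) (hν : ∀ z ∈ UHP, centeredShift μ t ω z = stT ν z) (h : ν (Ioo a b) = 0)
    (him : ∀ x ∈ Ioo a b, (ω x).im = 0) : acPart μt (Ioo a b) = 0 := by
  have := hμt.1
  set Z : Set ℝ := {x | (t : ℂ) * ω x - x = 0}
  rw [← inter_union_sdiff (Ioo a b) Z]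
  refine measure_union_null ?_ ?_
  · exact withDensity_absolutelyContinuous _ _
      ((hω.subsingleton_zeros_of_measure_Ioo_eq_zero hν ht h).measure_zero volume)
  · refine Measure.absolutelyContinuous_of_le (Measure.withDensity_rnDeriv_le μt volume)
      (measure_eq_zero_of_tendsto_stT_im_zero fun x hx => ?_)
    simpa [him x hx.1] using hμt.tendsto_stT_im hω ht.ne' hx.2

lemma msupp_boundaryMeasure_centeredShift
    [IsFiniteMeasure (boundaryMeasure (centeredShift μ t ω))] (hμt : IsFreePow μ ω μt)
    (hω : IsSubordT μ t ω) (ht : 1 < t)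
    (hν : ∀ z ∈ UHP, centeredShift μ t ω z = stT (boundaryMeasure (centeredShift μ t ω)) z) :
    msupp (boundaryMeasure (centeredShift μ t ω)) = msupp (acPart μt) := by
  refine msupp_eq_of_measure_Ioo_eq_zero_iff fun a b => ?_
  have hzero := boundaryMeasure_eq_zero_iff hω.continuousOn_centeredShift
    hω.centeredShift_im_nonneg (isOpen_Ioo (a := a) (b := b))
  simp only [centeredShift_ofReal_im] at hzero
  exact ⟨fun h => hμt.acPart_Ioo_eq_zero hω ht hν h (hzero.1 h),
    fun h => hzero.2 fun x => hμt.im_eq_zero_of_acPart_eq_zero hω ht isOpen_Ioo h⟩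

end IsFreePow

end Support

theorem nevanlinna_representation_omega_t_general (μ μt : Measure ℝ) [IsProbabilityMeasure μ]
    (hμ : MemLp id 2 μ) (t : ℝ) (ht : 1 < t) (ω : ℂ → ℂ) (hω : IsSubordT μ t ω)
    (hμt : IsFreePow μ ω μt) :
    ∃ ν : Measure ℝ, IsFiniteMeasure ν ∧
      (∀ z ∈ UHP,
        ω z - z = -(((t - 1) * ∫ x, x ∂μ : ℝ) : ℂ) + ∫ x, ((x : ℂ) - z)⁻¹ ∂ν) ∧
      (ν Set.univ).toReal = (t - 1) * ((∫ x, x ^ 2 ∂μ) - (∫ x, x ∂μ) ^ 2) ∧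
      msupp ν = msupp (acPart μt) := by
  have hcont := hω.continuousOn_centeredShift
  have hdiff := hω.differentiableOn_centeredShift
  have hbdd := fun z hz => hω.norm_centeredShift_le hμ ht.le (z := z) hz
  have him := hω.centeredShift_im_nonneg
  have hlim := hω.tendsto_mul_centeredShift hμ
  have hfin := isFiniteMeasure_boundaryMeasure hcont hdiff hbdd him hlim
  have hrep := fun z hz => eq_stT_boundaryMeasure hcont hdiff hbdd him hlim (z := z) hz
  refine ⟨boundaryMeasure (centeredShift μ t ω), hfin, fun z hz => ?_, ?_,
    hμt.msupp_boundaryMeasure_centeredShift hω ht hrep⟩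
  · rw [← stT, ← hrep z hz, centeredShift]
    ring
  · have hvar : ProbabilityTheory.variance id μ = (∫ x, x ^ 2 ∂μ) - (∫ x, x ∂μ) ^ 2 :=
      ProbabilityTheory.variance_eq_sub hμ
    rw [← hvar]
    refine measureReal_univ_eq_of_tendsto (hlim.congr' ?_)
    filter_upwards [eventually_gt_atTop 0] with η hη
    rw [hrep _ (mul_I_mem_UHP hη)]

/-- Nevanlinna representation of `ω_t − id`. -/
theorem nevanlinna_representation_omega_t
    (μ μt : Measure ℝ) (nac npp nppout : ℕ)
    (Em Ep : Fin nac → ℝ) (atom : Fin npp → ℝ) (ρ : ℝ → ℝ)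
    (hμ : Assumption1 μ nac npp nppout Em Ep atom ρ)
    (t : ℝ) (ht : 1 < t) (ω : ℂ → ℂ) (hω : IsSubordT μ t ω)
    (hμt : IsFreePow μ ω μt) :
    ∃ ν : Measure ℝ, IsFiniteMeasure ν ∧
      (∀ z ∈ UHP,
        ω z - z = -(((t - 1) * ∫ x, x ∂μ : ℝ) : ℂ) + ∫ x, ((x : ℂ) - z)⁻¹ ∂ν) ∧
      (ν Set.univ).toReal = (t - 1) * ((∫ x, x ^ 2 ∂μ) - (∫ x, x ∂μ) ^ 2) ∧
      msupp ν = msupp (acPart μt) := by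
  have := hμ.prob
  exact nevanlinna_representation_omega_t_general μ μt (memLp_of_isCompact_msupp hμ.compact 2) t ht
    ω hω hμt
end

section
/- Let μ_α and μ_β satisfy Assumption 2. Then the singular part of μ̂_α is purely atomic with finitely many atoms E_1^α,…,E_{m_α}^α, where m_α ≤ n_α − 1; each atom lies in one of the open gaps (A_i⁺, A_{i+1}⁻) between consecutive intervals of supp(μ_α), with at most one atom per gap, and each atom is a zero of m_{μ_α}; moreover supp(μ̂_α) = supp(μ_α) ∪ {E_1^α,…,E_{m_α}^α}. The analogous statements hold for μ̂_β, with m_β ≤ n_β − 1 atoms, each a zero of m_{μ_β} lying in a gap of supp(μ_β). -/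
open MeasureTheory Topology Filter Set

/-!
Both `m = m_μ` and `-1 / m` are Nevanlinna functions, with representing measures `μ` and `μ̂`. Three
facts drive the argument.

* At height `η`, the imaginary part of a Nevanlinna function bounds the mass `ν(B(x, η)) / (2η)` of
  its measure, and `Im m * Im (-1 / m) ≤ 1`. Hence `μ(B(x, η)) μ̂(B(x, η)) ≤ 4η²`: where `μ` has
  at least linear growth `μ̂` grows at most linearly, so by Besicovitch differentiation it is
  absolutely continuous there, and where `μ(B(x, η)) / η² → ∞` it has no atom.
* Off `supp μ`, `m` is real analytic and `μ̂` charges only its zeros.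
* On a gap of `supp μ`, `m` is strictly increasing, hence has at most one zero; to the left and to
  the right of `supp μ` it has none, having a constant sign.

The relation between `m` and `-1 / m` is symmetric, so the second fact also shows that `μ` charges
only isolated points off `supp μ̂`; being diffuse, it vanishes there, whence `supp μ ⊆ supp μ̂`.
-/

section Comparison

open Asymptotics Metric NNReal

lemma eventually_measure_closedBall_ne_top {X : Type*} [PseudoMetricSpace X] [MeasurableSpace X]
    (μ : Measure X) [IsLocallyFiniteMeasure μ] (x : X) :
    ∀ᶠ r in 𝓝[>] (0 : ℝ), μ (closedBall x r) ≠ ⊤ := by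
  obtain ⟨R, hR, hfin⟩ := (μ.finiteAt_nhds x).exists_mem_basis nhds_basis_closedBall
  filter_upwards [Ioo_mem_nhdsGT hR] with r hr
  exact measure_ne_top_of_subset (closedBall_subset_closedBall hr.2.le) hfin.ne

variable {α : Type*} [MetricSpace α] [SecondCountableTopology α] [MeasurableSpace α]
  [BorelSpace α] [HasBesicovitchCovering α] {μ ν : Measure α}
  [IsLocallyFiniteMeasure μ] [IsLocallyFiniteMeasure ν] {s : Set α}

lemma measure_le_mul_of_isBigOWith_closedBall {K : ℝ≥0}
    (h : ∀ x ∈ s, IsBigOWith K (𝓝[>] (0 : ℝ)) (fun r ↦ ν.real (closedBall x r))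
      (fun r ↦ μ.real (closedBall x r))) :
    ν s ≤ K * μ s := by
  have key := (Besicovitch.vitaliFamily ν).measure_le_of_frequently_le (ρ := ν) (K • μ) .rfl s
  refine key fun x hx ↦ (Besicovitch.tendsto_filterAt ν x).frequently (Eventually.frequently ?_)
  filter_upwards [(h x hx).bound, eventually_measure_closedBall_ne_top μ x,
    eventually_measure_closedBall_ne_top ν x] with r hr hμ hν
  rw [Real.norm_of_nonneg measureReal_nonneg, Real.norm_of_nonneg measureReal_nonneg] at hr
  rw [Measure.smul_apply, ENNReal.smul_def, smul_eq_mul,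
    ← ENNReal.toReal_le_toReal hν (ENNReal.mul_ne_top ENNReal.coe_ne_top hμ), ENNReal.toReal_mul]
  exact hr

lemma measure_eq_zero_of_isBigO_closedBall (hs : μ s = 0)
    (h : ∀ x ∈ s, (fun r ↦ ν.real (closedBall x r)) =O[𝓝[>] (0 : ℝ)]
      fun r ↦ μ.real (closedBall x r)) :
    ν s = 0 := by
  choose! K hK using fun x hx ↦ (h x hx).isBigOWith
  have hcover : s ⊆ ⋃ n : ℕ, {x ∈ s | K x ≤ n} := fun x hx ↦
    mem_iUnion.2 ((exists_nat_ge (K x)).imp fun n hn ↦ ⟨hx, hn⟩)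
  refine measure_mono_null hcover (measure_iUnion_null fun n ↦ le_antisymm ?_ zero_le)
  calc ν {x ∈ s | K x ≤ n}
      ≤ (n : ℝ≥0) * μ {x ∈ s | K x ≤ n} :=
        measure_le_mul_of_isBigOWith_closedBall fun x hx ↦ (hK x hx.1).weaken hx.2
    _ = 0 := by rw [measure_mono_null (sep_subset s _) hs, mul_zero]

lemma measure_eq_zero_of_isLittleO_closedBall
    (h : ∀ x ∈ s, (fun r ↦ ν.real (closedBall x r)) =o[𝓝[>] (0 : ℝ)]
      fun r ↦ μ.real (closedBall x r)) :
    ν s = 0 := by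
  have hcover : s ⊆ ⋃ n : ℕ, s ∩ spanningSets μ n := by
    rw [← inter_iUnion, iUnion_spanningSets, inter_univ]
  refine measure_mono_null hcover (measure_iUnion_null fun n ↦ le_antisymm ?_ zero_le)
  have hfin : μ (s ∩ spanningSets μ n) ≠ ⊤ :=
    measure_ne_top_of_subset inter_subset_right (measure_spanningSets_lt_top μ n).ne
  have hlim : Tendsto (fun ε : ℝ≥0 ↦ (ε : ENNReal) * μ (s ∩ spanningSets μ n))
      (𝓝[>] 0) (𝓝 0) := by
    simpa using ENNReal.Tendsto.mul_const
      ((ENNReal.continuous_coe.tendsto 0).mono_left nhdsWithin_le_nhds) (.inr hfin)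
  refine ge_of_tendsto hlim ?_
  filter_upwards [self_mem_nhdsWithin] with ε hε
  exact measure_le_mul_of_isBigOWith_closedBall fun x hx ↦ (h x hx.1).def' hε

end Comparison

lemma msupp_eq_support_s12 (ν : Measure ℝ) : msupp ν = ν.support := by
  ext x
  simp only [(nhds_basis_Ioo_pos x).mem_measureSupport, msupp, mem_ofPred_eq]

section StieltjesTransform

open Asymptotics Metric

lemma integral_pos_of_ae_pos {X : Type*} [MeasurableSpace X] {μ : Measure X} {f : X → ℝ}
    (hμ : μ ≠ 0) (hf : Integrable f μ) (hpos : ∀ᵐ x ∂μ, 0 < f x) : 0 < ∫ x, f x ∂μ := by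
  have := ae_neBot.2 hμ
  rw [integral_pos_iff_support_of_nonneg_ae (hpos.mono fun _ ↦ le_of_lt) hf, pos_iff_ne_zero]
  exact frequently_ae_iff.1 (hpos.mono fun _ ↦ ne_of_gt).frequently

lemma stT_ofReal (ν : Measure ℝ) (E : ℝ) : stT ν E = stTR ν E := by
  simp only [stT, stTR, ← integral_complex_ofReal, Complex.ofReal_inv, Complex.ofReal_sub]

lemma ae_im_le_norm_ofReal_sub (ν : Measure ℝ) (z : ℂ) :
    ∀ᵐ t : ℝ ∂ν, z.im ≤ ‖(t : ℂ) - z‖ := by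
  refine .of_forall fun t ↦ (le_abs_self z.im).trans ?_
  simpa using Complex.abs_im_le_norm ((t : ℂ) - z)

lemma exists_eventually_le_norm_ofReal_sub {ν : Measure ℝ} {E : ℝ} (hE : E ∉ ν.support) :
    ∃ δ > 0, ∀ᶠ z in 𝓝 (E : ℂ), ∀ᵐ t : ℝ ∂ν, δ ≤ ‖(t : ℂ) - z‖ := by
  obtain ⟨δ, hδ, hnull⟩ := nhds_basis_ball.notMem_measureSupport.1 hE
  refine ⟨δ / 2, half_pos hδ, ?_⟩
  filter_upwards [ball_mem_nhds (E : ℂ) (half_pos hδ)] with z hz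
  filter_upwards [measure_eq_zero_iff_ae_notMem.1 hnull] with t ht
  have htE : δ ≤ dist (t : ℂ) E := by
    simpa [Complex.dist_eq, Real.dist_eq, ← Complex.ofReal_sub] using ht
  rw [← dist_eq_norm]
  linarith [dist_triangle (t : ℂ) z E, mem_ball.1 hz]

lemma inv_sub_lt_inv_sub {t x y : ℝ} (hxy : x < y) (ht : t ∉ Icc x y) :
    (t - x)⁻¹ < (t - y)⁻¹ := by
  rcases lt_or_ge t x with htx | hxt
  · exact (inv_lt_inv_of_neg (by linarith) (by linarith)).2 (by linarith)
  · have hyt : y < t := not_le.1 fun hty ↦ ht ⟨hxt, hty⟩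
    exact inv_strictAnti₀ (by linarith) (by linarith)

lemma ae_inv_sub_lt_inv_sub {ν : Measure ℝ} {x y : ℝ} (hxy : x < y)
    (h : Disjoint (Icc x y) ν.support) : ∀ᵐ t ∂ν, (t - x)⁻¹ < (t - y)⁻¹ := by
  filter_upwards [Measure.support_mem_ae] with t ht
  exact inv_sub_lt_inv_sub hxy (h.notMem_of_mem_right ht)

variable {ν : Measure ℝ} [IsFiniteMeasure ν] {z : ℂ} {E x y δ : ℝ}

lemma integrable_inv_ofReal_sub_s12 (hδ : 0 < δ) (h : ∀ᵐ t : ℝ ∂ν, δ ≤ ‖(t : ℂ) - z‖) :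
    Integrable (fun t : ℝ ↦ ((t : ℂ) - z)⁻¹) ν := by
  refine .of_bound (by fun_prop) δ⁻¹ (h.mono fun t ht ↦ ?_)
  rw [norm_inv]
  gcongr

lemma integrable_inv_normSq_ofReal_sub (hδ : 0 < δ) (h : ∀ᵐ t : ℝ ∂ν, δ ≤ ‖(t : ℂ) - z‖) :
    Integrable (fun t : ℝ ↦ (Complex.normSq ((t : ℂ) - z))⁻¹) ν := by
  refine .of_bound (Measurable.aestronglyMeasurable
    (Complex.continuous_normSq.measurable.comp (by fun_prop)).inv) (δ ^ 2)⁻¹ (h.mono fun t ht ↦ ?_)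
  rw [Complex.normSq_eq_norm_sq, norm_inv, norm_pow, norm_norm]
  gcongr

lemma Ifun_isBigO_one (hE : E ∉ ν.support) : Ifun ν =O[𝓝 (E : ℂ)] (1 : ℂ → ℝ) := by
  obtain ⟨δ, hδ, h⟩ := exists_eventually_le_norm_ofReal_sub hE
  refine .of_bound ((δ ^ 2)⁻¹ * ν.real univ) ?_
  filter_upwards [h] with z hz
  rw [Pi.one_apply, norm_one, mul_one]
  refine norm_integral_le_of_norm_le_const (hz.mono fun t ht ↦ ?_)
  rw [Complex.normSq_eq_norm_sq, norm_inv, norm_pow, norm_norm]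
  gcongr

lemma im_stT (ν : Measure ℝ) [IsFiniteMeasure ν] (hz : 0 < z.im) :
    (stT ν z).im = z.im * Ifun ν z := by
  have hint := integrable_inv_ofReal_sub_s12 hz (ae_im_le_norm_ofReal_sub ν z)
  simpa [stT, Ifun, Complex.inv_im, div_eq_mul_inv, integral_const_mul] using
    (integral_im hint).symm

lemma Ifun_nonneg (ν : Measure ℝ) (z : ℂ) : 0 ≤ Ifun ν z :=
  integral_nonneg fun _ ↦ inv_nonneg.2 (Complex.normSq_nonneg _)

lemma Ifun_pos_s12 (hν : ν ≠ 0) (hz : 0 < z.im) : 0 < Ifun ν z := by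
  have hle := ae_im_le_norm_ofReal_sub ν z
  refine integral_pos_of_ae_pos hν (integrable_inv_normSq_ofReal_sub hz hle)
    (hle.mono fun t ht ↦ ?_)
  exact inv_pos.2 (Complex.normSq_pos.2 (norm_pos_iff.1 (hz.trans_le ht)))

lemma measureReal_closedBall_le_Ifun (ν : Measure ℝ) [IsFiniteMeasure ν] (x : ℝ) {η : ℝ}
    (hη : 0 < η) : ν.real (closedBall x η) ≤ 2 * η ^ 2 * Ifun ν (x + η * Complex.I) := by
  have him : 0 < (x + η * Complex.I : ℂ).im := by simpa using hη
  have hball : closedBall x η ⊆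
      {t : ℝ | (2 * η ^ 2)⁻¹ ≤ (Complex.normSq ((t : ℂ) - (x + η * Complex.I)))⁻¹} := by
    intro t ht
    have hnormSq : Complex.normSq ((t : ℂ) - (x + η * Complex.I)) = (t - x) ^ 2 + η ^ 2 := by
      simp [Complex.normSq_apply, sq]
    have : (t - x) ^ 2 ≤ η ^ 2 := sq_le_sq.2 (by rwa [abs_of_pos hη, ← Real.dist_eq])
    rw [mem_ofPred_eq, hnormSq]
    exact inv_anti₀ (by positivity) (by linarith)
  have hint := integrable_inv_normSq_ofReal_sub him (ae_im_le_norm_ofReal_sub ν _)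
  have markov := mul_meas_ge_le_integral_of_nonneg
    (.of_forall fun t ↦ inv_nonneg.2 (Complex.normSq_nonneg _)) hint (2 * η ^ 2)⁻¹
  calc ν.real (closedBall x η)
      ≤ ν.real _ := measureReal_mono hball
    _ ≤ 2 * η ^ 2 * Ifun ν (x + η * Complex.I) :=
      (inv_mul_le_iff₀ (by positivity)).1 markov

lemma continuousAt_stT (hE : E ∉ ν.support) : ContinuousAt (stT ν) E := by
  obtain ⟨δ, hδ, h⟩ := exists_eventually_le_norm_ofReal_sub hE
  refine continuousAt_of_dominated (bound := fun _ ↦ δ⁻¹)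
    (.of_forall fun z ↦ by fun_prop) ?_ (integrable_const _) ?_
  · filter_upwards [h] with z hz
    filter_upwards [hz] with t ht
    rw [norm_inv]
    gcongr
  · filter_upwards [h.self_of_nhds] with t ht
    have : (t : ℂ) - E ≠ 0 := norm_pos_iff.1 (hδ.trans_le ht)
    fun_prop (disch := assumption)

lemma integrable_inv_sub (hE : E ∉ ν.support) : Integrable (fun t : ℝ ↦ (t - E)⁻¹) ν := by
  obtain ⟨δ, hδ, h⟩ := exists_eventually_le_norm_ofReal_sub hE
  simpa [← Complex.ofReal_sub, ← Complex.ofReal_inv] using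
    (integrable_inv_ofReal_sub_s12 hδ h.self_of_nhds).re

lemma stTR_le_stTR (hxy : x < y) (h : Disjoint (Icc x y) ν.support) : stTR ν x ≤ stTR ν y :=
  integral_mono_ae (integrable_inv_sub (h.notMem_of_mem_left (left_mem_Icc.2 hxy.le)))
    (integrable_inv_sub (h.notMem_of_mem_left (right_mem_Icc.2 hxy.le)))
    ((ae_inv_sub_lt_inv_sub hxy h).mono fun _ ↦ le_of_lt)

lemma stTR_lt_stTR (hν : ν ≠ 0) (hxy : x < y) (h : Disjoint (Icc x y) ν.support) :
    stTR ν x < stTR ν y := by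
  have hx := integrable_inv_sub (h.notMem_of_mem_left (left_mem_Icc.2 hxy.le))
  have hy := integrable_inv_sub (h.notMem_of_mem_left (right_mem_Icc.2 hxy.le))
  have hpos := integral_pos_of_ae_pos hν (hy.sub hx)
    ((ae_inv_sub_lt_inv_sub hxy h).mono fun _ ↦ sub_pos.2)
  simp only [Pi.sub_apply, integral_sub hy hx] at hpos
  exact sub_pos.1 hpos

lemma exists_mem_support_lt_of_stTR_nonpos (hν : ν ≠ 0) (hE : E ∉ ν.support) (h : stTR ν E ≤ 0) :
    ∃ t ∈ ν.support, t < E := by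
  by_contra! hle
  refine h.not_gt (integral_pos_of_ae_pos hν (integrable_inv_sub hE) ?_)
  filter_upwards [Measure.support_mem_ae] with t ht
  exact inv_pos.2 (sub_pos.2 ((hle t ht).lt_of_ne fun h ↦ hE (h ▸ ht)))

lemma exists_mem_support_gt_of_stTR_nonneg (hν : ν ≠ 0) (hE : E ∉ ν.support) (h : 0 ≤ stTR ν E) :
    ∃ t ∈ ν.support, E < t := by
  by_contra! hle
  have hpos := integral_pos_of_ae_pos hν (integrable_inv_sub hE).neg (by
    filter_upwards [Measure.support_mem_ae] with t ht
    exact neg_pos.2 (inv_lt_zero.2 (sub_neg.2 ((hle t ht).lt_of_ne fun h ↦ hE (h ▸ ht)))))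
  simp only [Pi.neg_apply, integral_neg] at hpos
  exact (neg_pos.1 hpos).not_ge h

end StieltjesTransform

open Asymptotics Metric in
lemma isBigO_measureReal_volume_closedBall (x : ℝ) :
    (fun η ↦ η) =O[𝓝[>] (0 : ℝ)] fun η ↦ volume.real (closedBall x η) := by
  refine .of_bound 1 ?_
  filter_upwards [self_mem_nhdsWithin] with η (hη : 0 < η)
  rw [Real.volume_real_closedBall hη.le, Real.norm_of_nonneg hη.le,
    Real.norm_of_nonneg (by positivity)]
  linarith

lemma tendsto_ofReal_add_mul_I (x : ℝ) :
    Tendsto (fun η : ℝ ↦ (x + η * Complex.I : ℂ)) (𝓝[>] 0) (𝓝 x) := by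
  have hcont : Continuous fun η : ℝ ↦ (x + η * Complex.I : ℂ) := by fun_prop
  simpa using (hcont.tendsto 0).mono_left nhdsWithin_le_nhds

lemma ofReal_add_mul_I_mem_UHP (x : ℝ) {η : ℝ} (hη : 0 < η) :
    (x + η * Complex.I : ℂ) ∈ UHP := by
  simpa [UHP] using hη

/-- A nonconstant Nevanlinna function `z ↦ const + slope * z + ∫ (t - z)⁻¹ ∂measure` whose
representing measure is finite, encoded by its representation. -/
structure NevanlinnaData where
  const : ℝ
  slope : ℝ
  slope_nonneg : 0 ≤ slope
  measure : Measure ℝ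
  finite : IsFiniteMeasure measure
  nonconst : 0 < slope ∨ measure ≠ 0

attribute [instance] NevanlinnaData.finite

namespace NevanlinnaData

open Asymptotics Metric

variable (F G : NevanlinnaData)

/-- The function on the upper half-plane represented by `F`. -/
noncomputable def fn (z : ℂ) : ℂ := F.const + F.slope * z + stT F.measure z

/-- The values of the function represented by `F` on the real axis, off the support of
`F.measure`. -/
noncomputable def realFn (E : ℝ) : ℝ := F.const + F.slope * E + stTR F.measure E

/-- The real zeros, off the support of `F.measure`, of the function represented by `F`. -/
def zeros : Set ℝ := {E | E ∉ F.measure.support ∧ F.realFn E = 0}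

/-- The functions represented by `F` and `G` satisfy `G = -1 / F` on the upper half-plane. -/
def IsNegReciprocal : Prop := ∀ z ∈ UHP, F.fn z * G.fn z = -1

variable {F G} {z : ℂ} {x y E : ℝ} {s : Set ℝ}

lemma fn_ofReal (F : NevanlinnaData) (E : ℝ) : F.fn E = F.realFn E := by
  simp [fn, realFn, stT_ofReal]

lemma im_fn (F : NevanlinnaData) (hz : z ∈ UHP) :
    (F.fn z).im = z.im * (F.slope + Ifun F.measure z) := by
  rw [fn, Complex.add_im, Complex.add_im, Complex.ofReal_im, Complex.im_ofReal_mul,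
    im_stT F.measure hz]
  ring

lemma im_fn_pos (F : NevanlinnaData) (hz : z ∈ UHP) : 0 < (F.fn z).im := by
  rw [F.im_fn hz]
  refine mul_pos hz ?_
  rcases F.nonconst with hslope | hmeas
  · exact add_pos_of_pos_of_nonneg hslope (Ifun_nonneg _ _)
  · exact add_pos_of_nonneg_of_pos F.slope_nonneg (Ifun_pos_s12 hmeas hz)

lemma fn_ne_zero (F : NevanlinnaData) (hz : z ∈ UHP) : F.fn z ≠ 0 := fun h ↦
  (F.im_fn_pos hz).ne' (by rw [h, Complex.zero_im])

lemma continuousAt_fn (hE : E ∉ F.measure.support) : ContinuousAt F.fn E :=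
  ContinuousAt.add (by fun_prop) (continuousAt_stT hE)

lemma tendsto_fn (hE : E ∉ F.measure.support) :
    Tendsto (fun η : ℝ ↦ F.fn (E + η * Complex.I)) (𝓝[>] 0) (𝓝 (F.realFn E)) := by
  rw [← fn_ofReal]
  exact (continuousAt_fn hE).tendsto.comp (tendsto_ofReal_add_mul_I E)

lemma im_fn_isBigO (hE : E ∉ F.measure.support) :
    (fun η : ℝ ↦ (F.fn (E + η * Complex.I)).im) =O[𝓝[>] 0] fun η ↦ η := by
  have hbdd : (fun η : ℝ ↦ F.slope + Ifun F.measure (E + η * Complex.I)) =O[𝓝[>] 0]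
      (1 : ℝ → ℝ) :=
    (isBigO_const_const _ one_ne_zero _).add
      ((Ifun_isBigO_one hE).comp_tendsto (tendsto_ofReal_add_mul_I E))
  refine ((isBigO_refl (fun η : ℝ ↦ η) _).mul hbdd).congr' ?_ (.of_forall fun η ↦ by simp)
  filter_upwards [self_mem_nhdsWithin] with η hη
  simp [F.im_fn (ofReal_add_mul_I_mem_UHP E hη)]

lemma measureReal_closedBall_le (F : NevanlinnaData) (x : ℝ) {η : ℝ} (hη : 0 < η) :
    F.measure.real (closedBall x η) ≤ 2 * η * (F.fn (x + η * Complex.I)).im := by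
  have him : (x + η * Complex.I : ℂ).im = η := by simp
  have hslope := mul_nonneg (sq_nonneg η) F.slope_nonneg
  rw [F.im_fn (ofReal_add_mul_I_mem_UHP x hη), him]
  linarith [measureReal_closedBall_le_Ifun F.measure x hη]

lemma realFn_lt_realFn (hxy : x < y) (h : Disjoint (Icc x y) F.measure.support) :
    F.realFn x < F.realFn y := by
  unfold realFn
  rcases F.nonconst with hslope | hmeas
  · linarith [mul_lt_mul_of_pos_left hxy hslope, stTR_le_stTR hxy h]
  · linarith [mul_le_mul_of_nonneg_left hxy.le F.slope_nonneg, stTR_lt_stTR hmeas hxy h]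

lemma subsingleton_zeros_inter (hs : s.OrdConnected) (h : Disjoint s F.measure.support) :
    (F.zeros ∩ s).Subsingleton := by
  have key : ∀ a ∈ F.zeros ∩ s, ∀ b ∈ F.zeros ∩ s, ¬a < b := fun a ha b hb hab ↦
    (realFn_lt_realFn hab (h.mono_left (hs.out ha.2 hb.2))).ne (ha.1.2.trans hb.1.2.symm)
  exact fun a ha b hb ↦ le_antisymm (not_lt.1 (key b hb a ha)) (not_lt.1 (key a ha b hb))

lemma isClosed_support_union_zeros (F : NevanlinnaData) :
    IsClosed (F.measure.support ∪ F.zeros) := by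
  rw [← isOpen_compl_iff, isOpen_iff_mem_nhds]
  intro E hE
  obtain ⟨hsupp, hzero⟩ := not_or.1 hE
  have hfn : F.fn E ≠ 0 := by
    rw [fn_ofReal, Complex.ofReal_ne_zero]
    exact fun h ↦ hzero ⟨hsupp, h⟩
  have hcont : Tendsto (fun E' : ℝ ↦ F.fn E') (𝓝 E) (𝓝 (F.fn E)) :=
    (continuousAt_fn hsupp).tendsto.comp Complex.continuous_ofReal.continuousAt
  filter_upwards [Measure.isOpen_compl_support.mem_nhds hsupp, hcont.eventually_ne hfn]
    with E' hsupp' hfn'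
  rintro (h | h)
  · exact hsupp' h
  · exact hfn' (by rw [fn_ofReal, h.2, Complex.ofReal_zero])

namespace IsNegReciprocal

lemma symm (h : IsNegReciprocal F G) : IsNegReciprocal G F := fun z hz ↦ by
  rw [mul_comm, h z hz]

lemma fn_eq (h : IsNegReciprocal F G) (hz : z ∈ UHP) : G.fn z = -(F.fn z)⁻¹ := by
  rw [eq_neg_iff_add_eq_zero]
  field_simp [F.fn_ne_zero hz]
  linear_combination h z hz

lemma im_fn_eq (h : IsNegReciprocal F G) (hz : z ∈ UHP) :
    (G.fn z).im = (F.fn z).im * Complex.normSq (F.fn z)⁻¹ := by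
  rw [h.fn_eq hz, Complex.neg_im, Complex.inv_im, Complex.normSq_inv]
  ring

lemma measureReal_closedBall_mul_le (h : IsNegReciprocal F G) (x : ℝ) {η : ℝ} (hη : 0 < η) :
    F.measure.real (closedBall x η) * G.measure.real (closedBall x η) ≤ 4 * η ^ 2 := by
  set w : ℂ := x + η * Complex.I
  have hw : w ∈ UHP := ofReal_add_mul_I_mem_UHP x hη
  have him : (F.fn w).im * (G.fn w).im ≤ 1 := calc
    (F.fn w).im * (G.fn w).im ≤ ‖F.fn w‖ * ‖G.fn w‖ :=
      mul_le_mul (Complex.im_le_norm _) (Complex.im_le_norm _) (G.im_fn_pos hw).le (norm_nonneg _)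
    _ = 1 := by rw [← norm_mul, h w hw, norm_neg, norm_one]
  calc F.measure.real (closedBall x η) * G.measure.real (closedBall x η)
      ≤ (2 * η * (F.fn w).im) * (2 * η * (G.fn w).im) :=
        mul_le_mul (F.measureReal_closedBall_le x hη) (G.measureReal_closedBall_le x hη)
          measureReal_nonneg (mul_nonneg (by positivity) (F.im_fn_pos hw).le)
    _ = 4 * η ^ 2 * ((F.fn w).im * (G.fn w).im) := by ring
    _ ≤ 4 * η ^ 2 := mul_le_of_le_one_right (by positivity) him

lemma measureReal_closedBall_isBigO_sq (h : IsNegReciprocal F G)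
    (hE : E ∉ F.measure.support ∪ F.zeros) :
    (fun η ↦ G.measure.real (closedBall E η)) =O[𝓝[>] 0] fun η ↦ η ^ 2 := by
  obtain ⟨hsupp, hzero⟩ := not_or.1 hE
  have hne : (F.realFn E : ℂ) ≠ 0 := Complex.ofReal_ne_zero.2 fun h0 ↦ hzero ⟨hsupp, h0⟩
  have hnormSq : (fun η : ℝ ↦ Complex.normSq (F.fn (E + η * Complex.I))⁻¹) =O[𝓝[>] 0]
      (1 : ℝ → ℝ) :=
    ((Complex.continuous_normSq.tendsto _).comp ((tendsto_fn hsupp).inv₀ hne)).isBigO_one ℝ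
  have him : (fun η : ℝ ↦ (G.fn (E + η * Complex.I)).im) =O[𝓝[>] 0] fun η ↦ η := by
    refine ((im_fn_isBigO hsupp).mul hnormSq).congr' ?_ (.of_forall fun η ↦ by simp)
    filter_upwards [self_mem_nhdsWithin] with η hη
    rw [h.im_fn_eq (ofReal_add_mul_I_mem_UHP E hη)]
  have hball : (fun η ↦ G.measure.real (closedBall E η)) =O[𝓝[>] 0]
      fun η : ℝ ↦ η * (G.fn (E + η * Complex.I)).im := by
    refine .of_bound 2 ?_
    filter_upwards [self_mem_nhdsWithin] with η hη
    rw [Real.norm_of_nonneg measureReal_nonneg]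
    calc G.measure.real (closedBall E η)
        ≤ 2 * (η * (G.fn (E + η * Complex.I)).im) := by
          linarith [G.measureReal_closedBall_le E hη]
      _ ≤ 2 * ‖η * (G.fn (E + η * Complex.I)).im‖ := by
          gcongr
          exact Real.le_norm_self _
  simpa only [sq] using hball.trans ((isBigO_refl _ _).mul him)

lemma measure_compl_support_union_zeros (h : IsNegReciprocal F G) :
    G.measure (F.measure.support ∪ F.zeros)ᶜ = 0 := by
  refine measure_eq_zero_of_isLittleO_closedBall (μ := volume) fun E hE ↦ ?_
  refine (h.measureReal_closedBall_isBigO_sq hE).trans_isLittleO ?_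
  have hsq : (fun η : ℝ ↦ η ^ 2) =o[𝓝[>] 0] fun η ↦ η :=
    (isLittleO_pow_id one_lt_two).mono nhdsWithin_le_nhds
  exact hsq.trans_isBigO (isBigO_measureReal_volume_closedBall E)

lemma support_subset_union_zeros (h : IsNegReciprocal F G) :
    G.measure.support ⊆ F.measure.support ∪ F.zeros :=
  Measure.support_subset_of_isClosed F.isClosed_support_union_zeros
    (mem_ae_iff.2 h.measure_compl_support_union_zeros)

lemma zeros_subset_support (h : IsNegReciprocal F G) : F.zeros ⊆ G.measure.support := by
  intro E hE
  by_contra hG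
  have hlim := (tendsto_fn hE.1).mul (tendsto_fn hG)
  rw [hE.2, Complex.ofReal_zero, zero_mul] at hlim
  have hconst : Tendsto (fun _ : ℝ ↦ (-1 : ℂ)) (𝓝[>] 0) (𝓝 0) := hlim.congr' <| by
    filter_upwards [self_mem_nhdsWithin] with η hη
    exact h _ (ofReal_add_mul_I_mem_UHP E hη)
  exact neg_ne_zero.2 one_ne_zero (tendsto_const_nhds_iff.1 hconst)

lemma measure_diff_zeros (h : IsNegReciprocal F G) (hs : Disjoint s F.measure.support) :
    G.measure (s \ F.zeros) = 0 :=
  measure_mono_null (fun _ ht ↦ not_or.2 ⟨hs.notMem_of_mem_left ht.1, ht.2⟩)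
    h.measure_compl_support_union_zeros

lemma measure_singleton_ne_zero (h : IsNegReciprocal F G) (hE : E ∈ F.zeros) :
    G.measure {E} ≠ 0 := by
  obtain ⟨ε, hε, hsub⟩ := nhds_basis_ball.mem_iff.1 (Measure.isOpen_compl_support.mem_nhds hE.1)
  have hdisj : Disjoint (ball E ε) F.measure.support := disjoint_left.2 hsub
  have hzeros : F.zeros ∩ ball E ε ⊆ {E} := fun t ht ↦
    subsingleton_zeros_inter (convex_ball E ε).ordConnected hdisj ht ⟨hE, mem_ball_self hε⟩
  have hpos := (Measure.mem_support_iff_forall E).1 (h.zeros_subset_support hE) _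
    (ball_mem_nhds E hε)
  refine fun hnull ↦ hpos.ne' ?_
  rw [← inter_union_sdiff (ball E ε) F.zeros, inter_comm]
  exact measure_union_null (measure_mono_null hzeros hnull) (h.measure_diff_zeros hdisj)

lemma support_subset_support [NullSingletonClass F.measure] (h : IsNegReciprocal F G) :
    F.measure.support ⊆ G.measure.support := by
  intro x hx
  by_contra hG
  obtain ⟨ε, hε, hsub⟩ := nhds_basis_ball.mem_iff.1 (Measure.isOpen_compl_support.mem_nhds hG)
  have hdisj : Disjoint (ball x ε) G.measure.support := disjoint_left.2 hsub
  have hpos := (Measure.mem_support_iff_forall x).1 hx _ (ball_mem_nhds x hε)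
  refine hpos.ne' ?_
  rw [← inter_union_sdiff (ball x ε) G.zeros, inter_comm]
  exact measure_union_null
    ((subsingleton_zeros_inter (convex_ball x ε).ordConnected hdisj).measure_zero _)
    (h.symm.measure_diff_zeros hdisj)

lemma support_eq [NullSingletonClass F.measure] (h : IsNegReciprocal F G) :
    G.measure.support = F.measure.support ∪ F.zeros :=
  h.support_subset_union_zeros.antisymm
    (union_subset h.support_subset_support h.zeros_subset_support)

lemma measureReal_closedBall_isBigO_id (h : IsNegReciprocal F G)
    (hx : (fun η ↦ η) =O[𝓝[>] 0] fun η ↦ F.measure.real (closedBall x η)) :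
    (fun η ↦ G.measure.real (closedBall x η)) =O[𝓝[>] 0] fun η ↦ η := by
  obtain ⟨C, hC, hlin⟩ := hx.exists_pos
  refine .of_bound (4 * C) ?_
  filter_upwards [hlin.bound, self_mem_nhdsWithin] with η hlinη (hη : 0 < η)
  rw [Real.norm_of_nonneg hη.le, Real.norm_of_nonneg measureReal_nonneg] at hlinη ⊢
  refine le_of_mul_le_mul_left ?_ hη
  calc η * G.measure.real (closedBall x η)
      ≤ C * F.measure.real (closedBall x η) * G.measure.real (closedBall x η) := by gcongr
    _ ≤ C * (4 * η ^ 2) := by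
      rw [mul_assoc]
      exact mul_le_mul_of_nonneg_left (h.measureReal_closedBall_mul_le x hη) (by positivity)
    _ = η * (4 * C * η) := by ring

lemma measure_singleton_eq_zero (h : IsNegReciprocal F G)
    (hx : (fun η ↦ η ^ 2) =o[𝓝[>] 0] fun η ↦ F.measure.real (closedBall x η)) :
    G.measure {x} = 0 := by
  refine (measureReal_eq_zero_iff (measure_ne_top _ _)).1
    (le_antisymm (le_of_forall_pos_le_add fun ε hε ↦ ?_) measureReal_nonneg)
  obtain ⟨η, hsq, hη⟩ := ((hx.def (show 0 < ε / 4 by positivity)).and self_mem_nhdsWithin).exists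
  replace hη : 0 < η := hη
  rw [Real.norm_of_nonneg (by positivity), Real.norm_of_nonneg measureReal_nonneg] at hsq
  have hη2 : 0 < η ^ 2 := by positivity
  rw [zero_add]
  refine le_of_mul_le_mul_left ?_ hη2
  calc η ^ 2 * G.measure.real {x}
      ≤ ε / 4 * F.measure.real (closedBall x η) * G.measure.real (closedBall x η) := by
        gcongr
        · exact measure_ne_top _ _
        · exact singleton_subset_iff.2 (mem_closedBall_self hη.le)
    _ ≤ ε / 4 * (4 * η ^ 2) := by
      rw [mul_assoc]
      exact mul_le_mul_of_nonneg_left (h.measureReal_closedBall_mul_le x hη) (by positivity)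
    _ = η ^ 2 * ε := by ring

lemma restrict_compl_zeros_absolutelyContinuous (h : IsNegReciprocal F G) {T : Set ℝ}
    (hT : T.Countable)
    (hsq : ∀ x ∈ T, (fun η ↦ η ^ 2) =o[𝓝[>] 0] fun η ↦ F.measure.real (closedBall x η))
    (hlin : ∀ x ∈ F.measure.support \ T,
      (fun η ↦ η) =O[𝓝[>] 0] fun η ↦ F.measure.real (closedBall x η)) :
    G.measure.restrict F.zerosᶜ ≪ volume := by
  refine .mk fun s hs hnull ↦ ?_
  have hTnull : G.measure T = 0 := (measure_null_iff_singleton hT).2 fun x hx ↦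
    h.measure_singleton_eq_zero (hsq x hx)
  have hbulk : G.measure (s ∩ (F.measure.support \ T)) = 0 :=
    measure_eq_zero_of_isBigO_closedBall (measure_mono_null inter_subset_left hnull) fun x hx ↦
      (h.measureReal_closedBall_isBigO_id (hlin x hx.2)).trans
        (isBigO_measureReal_volume_closedBall x)
  rw [Measure.restrict_apply hs]
  refine measure_mono_null (fun x hx ↦ ?_) (measure_union_null (measure_union_null hTnull hbulk)
    h.measure_compl_support_union_zeros)
  by_cases hxT : x ∈ T
  · exact .inl (.inl hxT)
  by_cases hsupp : x ∈ F.measure.support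
  · exact .inl (.inr ⟨hx.1, hsupp, hxT⟩)
  · exact .inr (not_or.2 ⟨hsupp, hx.2⟩)

end IsNegReciprocal

end NevanlinnaData

section Gaps

variable {α : Type*} [LinearOrder α] {n : ℕ} {Am Ap : Fin n → α} {E : α} {i : ℕ}

/-- The intervals `[Am j, Ap j]` are nonempty, pairwise disjoint and listed from left to right. -/
structure OrderedIntervals (Am Ap : Fin n → α) : Prop where
  le : ∀ j, Am j ≤ Ap j
  ordered : ∀ i j, i < j → Ap i < Am j

/-- The open gap `(Ap i, Am (i + 1))` between the consecutive intervals `i` and `i + 1`; it is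
empty if there is no interval `i + 1`. -/
def intervalGap (Am Ap : Fin n → α) (i : ℕ) : Set α :=
  {E | ∃ h : i + 1 < n, E ∈ Ioo (Ap ⟨i, Nat.lt_of_succ_lt h⟩) (Am ⟨i + 1, h⟩)}

lemma ordConnected_intervalGap (Am Ap : Fin n → α) (i : ℕ) :
    (intervalGap Am Ap i).OrdConnected :=
  ⟨fun _ ⟨h, ha⟩ _ ⟨_, hb⟩ _ ht ↦ ⟨h, ordConnected_Ioo.out ha hb ht⟩⟩

namespace OrderedIntervals

lemma strictMono_left (h : OrderedIntervals Am Ap) : StrictMono Am :=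
  fun i j hij ↦ (h.le i).trans_lt (h.ordered i j hij)

lemma strictMono_right (h : OrderedIntervals Am Ap) : StrictMono Ap :=
  fun i j hij ↦ (h.ordered i j hij).trans_le (h.le j)

lemma disjoint_intervalGap (h : OrderedIntervals Am Ap) (i : ℕ) :
    Disjoint (intervalGap Am Ap i) (⋃ j, Icc (Am j) (Ap j)) := by
  refine disjoint_left.2 fun E ⟨hi, hE⟩ hmem ↦ ?_
  obtain ⟨j, hj⟩ := mem_iUnion.1 hmem
  rcases le_or_gt (j : ℕ) i with hji | hij
  · exact (hE.1.trans_le hj.2).not_ge (h.strictMono_right.monotone (Fin.mk_le_mk.2 hji))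
  · exact (hj.1.trans_lt hE.2).not_ge (h.strictMono_left.monotone (Fin.mk_le_mk.2 hij))

lemma exists_mem_intervalGap (h : OrderedIntervals Am Ap) (hE : E ∉ ⋃ j, Icc (Am j) (Ap j))
    (hlt : ∃ t ∈ ⋃ j, Icc (Am j) (Ap j), t < E) (hgt : ∃ t ∈ ⋃ j, Icc (Am j) (Ap j), E < t) :
    ∃ i, E ∈ intervalGap Am Ap i := by
  simp only [mem_iUnion, not_exists] at hE hlt hgt
  obtain ⟨a, ⟨j₀, hj₀⟩, haE⟩ := hlt
  obtain ⟨b, ⟨k, hk⟩, hEb⟩ := hgt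
  have left_or_right : ∀ j, Am j ≤ E → Ap j < E := fun j hj ↦ not_le.1 fun h' ↦ hE j ⟨hj, h'⟩
  obtain ⟨j, hjE, hmax⟩ := (Set.toFinite {j | Ap j < E}).exists_maximal
    ⟨j₀, left_or_right j₀ (hj₀.1.trans haE.le)⟩
  have hjk : j < k := h.strictMono_right.lt_iff_lt.1 (hjE.trans (hEb.trans_le hk.2))
  have hsucc : (j : ℕ) + 1 < n := (Nat.succ_le_of_lt hjk).trans_lt k.2
  refine ⟨j, hsucc, hjE, not_le.1 fun hle ↦ ?_⟩
  exact (Nat.lt_succ_self (j : ℕ)).not_ge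
    (hmax (left_or_right _ hle) (Fin.mk_le_mk.2 (Nat.le_succ j)))

end OrderedIntervals

lemma exists_enumeration_of_subset_intervalGap {Z : Set α}
    (hgap : ∀ E ∈ Z, ∃ i, E ∈ intervalGap Am Ap i)
    (hsub : ∀ i, (Z ∩ intervalGap Am Ap i).Subsingleton) :
    ∃ (m : ℕ) (Ept : Fin m → α) (gap : Fin m → ℕ), m ≤ n - 1 ∧ Function.Injective Ept ∧
      Function.Injective gap ∧ (∀ k, Ept k ∈ intervalGap Am Ap (gap k)) ∧ range Ept = Z := by
  choose f hf using fun E : Z ↦ hgap E E.2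
  have hinj : Function.Injective f := fun E E' h ↦
    Subtype.ext (hsub (f E) ⟨E.2, hf E⟩ ⟨E'.2, h ▸ hf E'⟩)
  let f' : Z → Fin (n - 1) := fun E ↦ ⟨f E, Nat.lt_sub_of_add_lt (hf E).1⟩
  have hinj' : Function.Injective f' := fun E E' h ↦ hinj (Fin.mk.inj_iff.1 h)
  have := Finite.of_injective f' hinj'
  let e := (Finite.equivFin Z).symm
  refine ⟨Nat.card Z, fun k ↦ e k, f ∘ e, ?_, Subtype.val_injective.comp e.injective,
    hinj.comp e.injective, fun k ↦ hf (e k), ?_⟩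
  · simpa using Nat.card_le_card_of_injective f' hinj'
  · exact (e.surjective.range_comp Subtype.val).trans Subtype.range_coe

end Gaps

section SingularPart

variable {X : Type*} [MeasurableSpace X] {μ ν : Measure X}

lemma singularPart_eq_restrict_of_restrict_compl_ac [ν.HaveLebesgueDecomposition μ] {s : Set X}
    (hs : MeasurableSet s) (hμs : μ s = 0) (hac : ν.restrict sᶜ ≪ μ) :
    ν.singularPart μ = ν.restrict s := by
  refine Measure.singularPart_eq_restrict ?_ hμs
  rw [← Measure.restrict_eq_zero, ← Measure.singularPart_restrict _ _ hs.compl,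
    Measure.singularPart_eq_zero_of_ac hac]

lemma restrict_range_eq_sum_dirac [MeasurableSingletonClass X] {ι : Type*} [Fintype ι]
    {a : ι → X} (ha : Function.Injective a) (ν : Measure X) :
    ν.restrict (range a) = ∑ i, ν {a i} • Measure.dirac (a i) := by
  rw [← iUnion_singleton_eq_range, Measure.restrict_iUnion
    (fun i j hij ↦ disjoint_singleton.2 (ha.ne hij)) fun i ↦ measurableSet_singleton _,
    Measure.sum_fintype]
  simp only [Measure.restrict_singleton]

end SingularPart

section Multicut

open Asymptotics Metric

/-- `μ` is a nonzero finite diffuse measure supported on the cuts `[Am j, Ap j]`, whose mass near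
each interior point of a cut is at least linear in the radius, and near each edge of a cut is much
larger than the square of the radius. -/
structure IsMulticut (μ : Measure ℝ) {n : ℕ} (Am Ap : Fin n → ℝ) : Prop where
  finite : IsFiniteMeasure μ
  ne_zero : μ ≠ 0
  diffuse : NullSingletonClass μ
  intervals : OrderedIntervals Am Ap
  support_eq : μ.support = ⋃ j, Icc (Am j) (Ap j)
  bulk : ∀ j, ∀ x ∈ Ioo (Am j) (Ap j),
    (fun η ↦ η) =O[𝓝[>] 0] fun η ↦ μ.real (closedBall x η)
  edge_left : ∀ j, (fun η ↦ η ^ 2) =o[𝓝[>] 0] fun η ↦ μ.real (closedBall (Am j) η)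
  edge_right : ∀ j, (fun η ↦ η ^ 2) =o[𝓝[>] 0] fun η ↦ μ.real (closedBall (Ap j) η)

/-- The Nevanlinna function `stT μ`. -/
def NevanlinnaData.stieltjes (μ : Measure ℝ) [IsFiniteMeasure μ] (hμ : μ ≠ 0) :
    NevanlinnaData where
  const := 0
  slope := 0
  slope_nonneg := le_rfl
  measure := μ
  finite := inferInstance
  nonconst := .inr hμ

/-- The Nevanlinna function `nrT μ`, with representing measure `μhat`. -/
noncomputable def IsNevanHat.data {μ μhat : Measure ℝ} (h : IsNevanHat μ μhat) :
    NevanlinnaData where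
  const := -∫ x, x ∂μ
  slope := 1
  slope_nonneg := zero_le_one
  measure := μhat
  finite := h.1
  nonconst := .inl one_pos

lemma IsNevanHat.isNegReciprocal {μ μhat : Measure ℝ} [IsFiniteMeasure μ] (h : IsNevanHat μ μhat)
    (hμ : μ ≠ 0) : (NevanlinnaData.stieltjes μ hμ).IsNegReciprocal h.data := by
  intro z hz
  have hF : (NevanlinnaData.stieltjes μ hμ).fn z = stT μ z := by
    simp [NevanlinnaData.fn, NevanlinnaData.stieltjes]
  have hG : h.data.fn z = nrT μ z := by
    have := h.2 z hz
    simp only [NevanlinnaData.fn, IsNevanHat.data, stT]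
    push_cast at this ⊢
    linear_combination -this
  have hne : stT μ z ≠ 0 := hF ▸ (NevanlinnaData.stieltjes μ hμ).fn_ne_zero hz
  rw [hF, hG, nrT, mul_neg, mul_inv_cancel₀ hne]

variable {μ : Measure ℝ} {n : ℕ} {Am Ap : Fin n → ℝ}

lemma NevanlinnaData.mem_zeros_stieltjes [IsFiniteMeasure μ] {hμ : μ ≠ 0} {E : ℝ} :
    E ∈ (stieltjes μ hμ).zeros ↔ E ∉ μ.support ∧ stTR μ E = 0 := by
  simp [zeros, realFn, stieltjes]

lemma IsMulticut.exists_mem_intervalGap (h : IsMulticut μ Am Ap) {E : ℝ} (hE : E ∉ μ.support)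
    (hzero : stTR μ E = 0) : ∃ i, E ∈ intervalGap Am Ap i := by
  have := h.finite
  refine h.intervals.exists_mem_intervalGap ?_ ?_ ?_ <;> rw [← h.support_eq]
  exacts [hE, exists_mem_support_lt_of_stTR_nonpos h.ne_zero hE hzero.le,
    exists_mem_support_gt_of_stTR_nonneg h.ne_zero hE hzero.ge]

lemma IsMulticut.restrict_compl_zeros_absolutelyContinuous {F G : NevanlinnaData}
    (h : IsMulticut F.measure Am Ap) (hFG : F.IsNegReciprocal G) :
    G.measure.restrict F.zerosᶜ ≪ volume := by
  refine hFG.restrict_compl_zeros_absolutelyContinuous (T := range Am ∪ range Ap)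
    ((countable_range Am).union (countable_range Ap)) ?_ ?_
  · rintro _ (⟨j, rfl⟩ | ⟨j, rfl⟩)
    exacts [h.edge_left j, h.edge_right j]
  · rintro x ⟨hx, hxT⟩
    rw [h.support_eq] at hx
    obtain ⟨j, hj⟩ := mem_iUnion.1 hx
    refine h.bulk j x ⟨hj.1.lt_of_ne fun hl ↦ hxT (.inl ⟨j, hl⟩),
      hj.2.lt_of_ne fun hr ↦ hxT (.inr ⟨j, hr.symm⟩)⟩

end Multicut

section Density

open Asymptotics Metric

lemma mul_measureReal_le_withDensity {X : Type*} [MeasurableSpace X] {μ : Measure X} {ρ : X → ℝ}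
    {s : Set X} {c : ℝ} (hs : MeasurableSet s)
    (hfin : μ.withDensity (fun x ↦ ENNReal.ofReal (ρ x)) s ≠ ⊤)
    (h : ∀ᵐ x ∂μ.restrict s, c ≤ ρ x) :
    c * μ.real s ≤ (μ.withDensity fun x ↦ ENNReal.ofReal (ρ x)).real s := by
  have hle : ENNReal.ofReal c * μ s ≤ μ.withDensity (fun x ↦ ENNReal.ofReal (ρ x)) s := by
    rw [withDensity_apply _ hs, ← setLIntegral_const]
    exact lintegral_mono_ae (h.mono fun x ↦ ENNReal.ofReal_le_ofReal)
  calc c * μ.real s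
      ≤ (ENNReal.ofReal c * μ s).toReal := by
        rw [ENNReal.toReal_mul]
        exact mul_le_mul_of_nonneg_right (ENNReal.toReal_ofReal' ▸ le_max_left c 0)
          ENNReal.toReal_nonneg
    _ ≤ (μ.withDensity fun x ↦ ENNReal.ofReal (ρ x)).real s := ENNReal.toReal_mono hfin hle

lemma exists_Ioo_subset_Ioo_inter_annulus {A B x η : ℝ} (hx : x ∈ Icc A B)
    (hη : η ≤ (B - A) / 2) :
    ∃ a, Ioo a (a + η / 2) ⊆ Ioo A B ∩ {t | |t - x| ∈ Ioo (η / 2) η} := by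
  rcases le_total x ((A + B) / 2) with hmid | hmid
  · refine ⟨x + η / 2, fun t ⟨hat, hta⟩ ↦ ⟨⟨?_, ?_⟩, ?_⟩⟩
    · linarith [hx.1]
    · linarith
    · rw [mem_ofPred_eq, abs_of_nonneg (by linarith)]
      constructor <;> linarith
  · refine ⟨x - η, fun t ⟨hat, hta⟩ ↦ ⟨⟨?_, ?_⟩, ?_⟩⟩
    · linarith
    · linarith [hx.2]
    · rw [mem_ofPred_eq, abs_of_nonpos (by linarith)]
      constructor <;> linarith

variable {ρ : ℝ → ℝ} {A B x : ℝ} {p : ℕ}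

lemma isBigOWith_pow_measureReal_closedBall {c : ℝ} (hc : 0 < c)
    [IsFiniteMeasure (volume.withDensity fun t ↦ ENNReal.ofReal (ρ t))]
    (hρ : ∀ t, 0 ≤ ρ t) (hAB : A < B) (hx : x ∈ Icc A B)
    (h : IsBigOWith c (𝓝 x ⊓ ae (volume.restrict (Ioo A B))) (fun t ↦ |t - x| ^ p) ρ) :
    IsBigOWith (2 ^ (p + 1) * c) (𝓝[>] 0) (fun η ↦ η ^ (p + 1))
      fun η ↦ (volume.withDensity fun t ↦ ENNReal.ofReal (ρ t)).real (closedBall x η) := by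
  obtain ⟨U, hU, V, hV, hUV⟩ := mem_inf_iff.1 h.bound
  obtain ⟨δ, hδ, hball⟩ := nhds_basis_ball.mem_iff.1 hU
  refine .of_bound ?_
  filter_upwards [Ioo_mem_nhdsGT (lt_min hδ (half_pos (sub_pos.2 hAB)))] with η ⟨hη, hηmin⟩
  obtain ⟨hηδ, hηAB⟩ := lt_min_iff.1 hηmin
  obtain ⟨a, ha⟩ := exists_Ioo_subset_Ioo_inter_annulus hx hηAB.le
  have hbound : ∀ᵐ t ∂volume.restrict (Ioo a (a + η / 2)), c⁻¹ * (η / 2) ^ p ≤ ρ t := by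
    filter_upwards [ae_restrict_mem measurableSet_Ioo,
      ae_mono (Measure.restrict_mono (ha.trans inter_subset_left) le_rfl) hV] with t hta htV
    obtain ⟨hηt, htη⟩ := (ha hta).2
    have htUV : t ∈ U ∩ V := ⟨hball (htη.trans hηδ), htV⟩
    rw [← hUV] at htUV
    have htρ : |t - x| ^ p ≤ c * ρ t := by
      simpa [abs_of_nonneg (hρ t)] using htUV
    rw [inv_mul_le_iff₀ hc]
    exact (pow_le_pow_left₀ (by positivity) hηt.le p).trans htρ
  have hmass := mul_measureReal_le_withDensity measurableSet_Ioo (measure_ne_top _ _) hbound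
  rw [Real.volume_real_Ioo_of_le (by linarith), add_sub_cancel_left, mul_assoc, ← pow_succ,
    inv_mul_le_iff₀ hc] at hmass
  have hsub : Ioo a (a + η / 2) ⊆ closedBall x η := fun t ht ↦ (ha ht).2.2.le
  rw [Real.norm_of_nonneg (by positivity), Real.norm_of_nonneg measureReal_nonneg]
  calc η ^ (p + 1) = 2 ^ (p + 1) * (η / 2) ^ (p + 1) := by rw [← mul_pow]; ring
    _ ≤ 2 ^ (p + 1) * (c * (volume.withDensity fun t ↦ ENNReal.ofReal (ρ t)).real
          (closedBall x η)) := by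
        gcongr
        exact hmass.trans (mul_le_mul_of_nonneg_left (measureReal_mono hsub) hc.le)
    _ = _ := by ring

lemma isBigO_pow_measureReal_closedBall
    [IsFiniteMeasure (volume.withDensity fun t ↦ ENNReal.ofReal (ρ t))]
    (hρ : ∀ t, 0 ≤ ρ t) (hAB : A < B) (hx : x ∈ Icc A B)
    (h : (fun t ↦ |t - x| ^ p) =O[𝓝 x ⊓ ae (volume.restrict (Ioo A B))] ρ) :
    (fun η ↦ η ^ (p + 1)) =O[𝓝[>] 0]
      fun η ↦ (volume.withDensity fun t ↦ ENNReal.ofReal (ρ t)).real (closedBall x η) := by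
  obtain ⟨c, hc, hO⟩ := h.exists_pos
  exact (isBigOWith_pow_measureReal_closedBall hc hρ hAB hx hO).isBigO

lemma isLittleO_pow_measureReal_closedBall
    [IsFiniteMeasure (volume.withDensity fun t ↦ ENNReal.ofReal (ρ t))]
    (hρ : ∀ t, 0 ≤ ρ t) (hAB : A < B) (hx : x ∈ Icc A B)
    (h : (fun t ↦ |t - x| ^ p) =o[𝓝 x ⊓ ae (volume.restrict (Ioo A B))] ρ) :
    (fun η ↦ η ^ (p + 1)) =o[𝓝[>] 0]
      fun η ↦ (volume.withDensity fun t ↦ ENNReal.ofReal (ρ t)).real (closedBall x η) := by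
  refine .of_isBigOWith fun c hc ↦ ?_
  have hc' : 0 < c / 2 ^ (p + 1) := by positivity
  refine (isBigOWith_pow_measureReal_closedBall hc' hρ hAB hx (h.forall_isBigOWith hc')).congr_const
    (mul_div_cancel₀ c (by positivity))

lemma isLittleO_id_rpow_mul_sub_rpow {s r d : ℝ} (hs : s < 1) (hd : 0 < d) :
    (fun u ↦ u) =o[𝓝[>] 0] fun u ↦ u ^ s * (d - u) ^ r := by
  have hpow : (fun u : ℝ ↦ u) =o[𝓝[>] 0] fun u ↦ u ^ s := by
    have hlim : Tendsto (fun u : ℝ ↦ u ^ (s - 1)) (𝓝[>] 0) atTop :=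
      tendsto_rpow_neg_nhdsGT_zero (sub_neg.2 hs)
    refine (isLittleO_iff_tendsto' ?_).2 (hlim.inv_tendsto_atTop.congr' ?_)
    all_goals filter_upwards [self_mem_nhdsWithin] with u (hu : 0 < u)
    · exact fun h ↦ absurd h (Real.rpow_pos_of_pos hu s).ne'
    · rw [Pi.inv_apply, Real.rpow_sub_one hu.ne', inv_div]
  have hconst : (fun _ ↦ d ^ r) =O[𝓝[>] 0] fun u : ℝ ↦ (d - u) ^ r := by
    refine ((isEquivalent_const_iff_tendsto (by positivity)).2 ?_).isBigO_symm
    have hcont : ContinuousAt (fun u : ℝ ↦ (d - u) ^ r) 0 :=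
      ContinuousAt.rpow_const (by fun_prop) (.inl (by simpa using hd.ne'))
    simpa using hcont.tendsto.mono_left nhdsWithin_le_nhds
  have hone : (fun _ : ℝ ↦ (1 : ℝ)) =O[𝓝[>] 0] fun u : ℝ ↦ (d - u) ^ r :=
    (isBigO_const_const 1 (by positivity) _).trans hconst
  simpa using hpow.mul_isBigO hone

lemma isLittleO_abs_sub_left_rpow_mul_rpow {s r : ℝ} (hs : s < 1) (hAB : A < B) :
    (fun t ↦ |t - A|) =o[𝓝[Ioo A B] A] fun t ↦ (t - A) ^ s * (B - t) ^ r := by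
  have hsub : Tendsto (fun t ↦ t - A) (𝓝[Ioo A B] A) (𝓝[>] 0) := by
    refine tendsto_nhdsWithin_iff.2 ⟨?_, ?_⟩
    · exact ((continuous_sub_right A).tendsto' A 0 (sub_self A)).mono_left nhdsWithin_le_nhds
    · filter_upwards [self_mem_nhdsWithin] with t ht using sub_pos.2 ht.1
  have hpow := (isLittleO_id_rpow_mul_sub_rpow (r := r) hs (sub_pos.2 hAB)).comp_tendsto hsub
  simpa only [Function.comp_def, sub_sub_sub_cancel_right] using hpow.abs_left

lemma isLittleO_abs_sub_right_rpow_mul_rpow {s r : ℝ} (hr : r < 1) (hAB : A < B) :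
    (fun t ↦ |t - B|) =o[𝓝[Ioo A B] B] fun t ↦ (t - A) ^ s * (B - t) ^ r := by
  have hsub : Tendsto (fun t ↦ B - t) (𝓝[Ioo A B] B) (𝓝[>] 0) := by
    refine tendsto_nhdsWithin_iff.2 ⟨?_, ?_⟩
    · exact ((continuous_sub_left B).tendsto' B 0 (sub_self B)).mono_left nhdsWithin_le_nhds
    · filter_upwards [self_mem_nhdsWithin] with t ht using sub_pos.2 ht.2
  have hpow := (isLittleO_id_rpow_mul_sub_rpow (r := s) hr (sub_pos.2 hAB)).comp_tendsto hsub
  simpa only [Function.comp_def, sub_sub_sub_cancel_left, abs_sub_comm B, mul_comm] using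
    hpow.abs_left

lemma isBigO_one_rpow_mul_rpow {s r : ℝ} (hx : x ∈ Ioo A B) :
    (fun _ ↦ (1 : ℝ)) =O[𝓝 x] fun t ↦ (t - A) ^ s * (B - t) ^ r := by
  have hA := sub_pos.2 hx.1
  have hB := sub_pos.2 hx.2
  have hcontA : ContinuousAt (fun t ↦ (t - A) ^ s) x :=
    ContinuousAt.rpow_const (by fun_prop) (.inl hA.ne')
  have hcontB : ContinuousAt (fun t ↦ (B - t) ^ r) x :=
    ContinuousAt.rpow_const (by fun_prop) (.inl hB.ne')
  have hne : (x - A) ^ s * (B - x) ^ r ≠ 0 := by positivity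
  exact (isBigO_const_const 1 hne _).trans
    ((isEquivalent_const_iff_tendsto hne).2 (hcontA.mul hcontB).tendsto).isBigO_symm

end Density

namespace Assumption2

open Asymptotics Metric

variable {μ : Measure ℝ} {n : ℕ} {Am Ap : Fin n → ℝ} {ρ : ℝ → ℝ}

lemma rpow_mul_rpow_isBigO_density (h : Assumption2 μ n Am Ap ρ) (j : Fin n) :
    ∃ s < (1 : ℝ), ∃ r < (1 : ℝ), (fun t ↦ (t - Am j) ^ s * (Ap j - t) ^ r)
      =O[ae (volume.restrict (Ioo (Am j) (Ap j)))] ρ := by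
  obtain ⟨s, r, C, -, hs, -, hr, hC, hpow⟩ := h.power_law j
  refine ⟨s, hs, r, hr, .of_bound C ((ae_restrict_iff' measurableSet_Ioo).2 ?_)⟩
  filter_upwards [hpow] with t htpow ht
  have hA := sub_pos.2 ht.1
  have hB := sub_pos.2 ht.2
  have hpos : 0 < (t - Am j) ^ s * (Ap j - t) ^ r := by positivity
  rw [Real.norm_of_nonneg hpos.le, Real.norm_of_nonneg (h.ρ_nonneg t),
    ← inv_mul_le_iff₀ (by positivity)]
  exact ((lt_div_iff₀ hpos).1 (htpow (Ioo_subset_Icc_self ht)).1).le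

lemma isMulticut (h : Assumption2 μ n Am Ap ρ) : IsMulticut μ Am Ap := by
  have := h.prob
  have : IsFiniteMeasure (volume.withDensity fun t ↦ ENNReal.ofReal (ρ t)) :=
    h.ac ▸ inferInstance
  have hac : μ ≪ volume := h.ac ▸ withDensity_absolutelyContinuous _ _
  choose s hs r hr hρ using h.rpow_mul_rpow_isBigO_density
  have hle (j : Fin n) (x : ℝ) :
      𝓝 x ⊓ ae (volume.restrict (Ioo (Am j) (Ap j))) ≤ 𝓝[Ioo (Am j) (Ap j)] x :=
    inf_le_inf_left _ (le_principal_iff.2 (ae_restrict_mem measurableSet_Ioo))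
  have hedge (j : Fin n) {x : ℝ} (hx : x ∈ Icc (Am j) (Ap j))
      (hlim : (fun t ↦ |t - x|) =o[𝓝[Ioo (Am j) (Ap j)] x]
        fun t ↦ (t - Am j) ^ s j * (Ap j - t) ^ r j) :
      (fun η ↦ η ^ 2) =o[𝓝[>] 0] fun η ↦ μ.real (closedBall x η) := by
    rw [h.ac]
    refine isLittleO_pow_measureReal_closedBall (p := 1) h.ρ_nonneg (h.lt j) hx ?_
    simpa only [pow_one] using (hlim.mono (hle j x)).trans_isBigO ((hρ j).mono inf_le_right)
  refine
    { finite := inferInstance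
      ne_zero := IsProbabilityMeasure.ne_zero μ
      diffuse := ⟨fun x ↦ hac Real.volume_singleton⟩
      intervals := ⟨fun j ↦ (h.lt j).le, h.ordered⟩
      support_eq := msupp_eq_support_s12 μ ▸ h.supp_eq
      bulk := fun j x hx ↦ ?_
      edge_left := fun j ↦ hedge j (left_mem_Icc.2 (h.lt j).le)
        (isLittleO_abs_sub_left_rpow_mul_rpow (hs j) (h.lt j))
      edge_right := fun j ↦ hedge j (right_mem_Icc.2 (h.lt j).le)
        (isLittleO_abs_sub_right_rpow_mul_rpow (hr j) (h.lt j)) }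
  have hone := ((isBigO_one_rpow_mul_rpow hx).mono inf_le_left).trans ((hρ j).mono inf_le_right)
  rw [h.ac]
  simpa only [zero_add, pow_one] using isBigO_pow_measureReal_closedBall (p := 0) h.ρ_nonneg
    (h.lt j) (Ioo_subset_Icc_self hx) (by simpa only [pow_zero] using hone)

end Assumption2

theorem nevanlinna_measure_structure_general {μ μhat : Measure ℝ} {n : ℕ}
    {Am Ap : Fin n → ℝ} (hμ : IsMulticut μ Am Ap) (hhat : IsNevanHat μ μhat) :
    ∃ (m : ℕ) (Ept : Fin m → ℝ) (gap : Fin m → ℕ),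
      m ≤ n - 1 ∧ Function.Injective Ept ∧ Function.Injective gap ∧
      (∀ k, Ept k ∈ intervalGap Am Ap (gap k)) ∧
      (∀ k, stTR μ (Ept k) = 0) ∧
      (∀ k, μhat {Ept k} ≠ 0) ∧
      μhat.singularPart volume = ∑ k, μhat {Ept k} • Measure.dirac (Ept k) ∧
      msupp μhat = msupp μ ∪ range Ept := by
  have := hμ.finite
  set F := NevanlinnaData.stieltjes μ hμ.ne_zero
  have hFG : F.IsNegReciprocal hhat.data := hhat.isNegReciprocal hμ.ne_zero
  have hμF : IsMulticut F.measure Am Ap := hμ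
  have hgap : ∀ E ∈ F.zeros, ∃ i, E ∈ intervalGap Am Ap i := fun E hE ↦
    have hE := NevanlinnaData.mem_zeros_stieltjes.1 hE
    hμ.exists_mem_intervalGap hE.1 hE.2
  have hsub : ∀ i, (F.zeros ∩ intervalGap Am Ap i).Subsingleton := fun i ↦
    NevanlinnaData.subsingleton_zeros_inter (ordConnected_intervalGap Am Ap i)
      (hμ.support_eq ▸ hμ.intervals.disjoint_intervalGap i)
  obtain ⟨m, Ept, gap, hm, hEpt, hinj, hmem, hrange⟩ :=
    exists_enumeration_of_subset_intervalGap hgap hsub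
  have hzero : ∀ k, Ept k ∈ F.zeros := fun k ↦ hrange ▸ mem_range_self k
  refine ⟨m, Ept, gap, hm, hEpt, hinj, hmem,
    fun k ↦ (NevanlinnaData.mem_zeros_stieltjes.1 (hzero k)).2,
    fun k ↦ hFG.measure_singleton_ne_zero (hzero k), ?_, ?_⟩
  · have hfin := finite_range Ept
    have := hhat.1
    rw [← restrict_range_eq_sum_dirac hEpt]
    refine singularPart_eq_restrict_of_restrict_compl_ac hfin.measurableSet
      (hfin.measure_zero volume) ?_
    rw [hrange]
    exact hμF.restrict_compl_zeros_absolutelyContinuous hFG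
  · rw [msupp_eq_support_s12, msupp_eq_support_s12, hrange]
    have := hμF.diffuse
    exact hFG.support_eq

/-- The singular parts of `μ̂_α` and `μ̂_β` are purely atomic, with at
most one atom in each gap of the respective supports, each atom being a zero of the
respective Cauchy–Stieltjes transform; and `supp(μ̂) = supp(μ) ∪ {atoms}`. -/
theorem nevanlinna_measure_structure
    (μa μb μhata μhatb : Measure ℝ) (na nb : ℕ)
    (Am Ap : Fin na → ℝ) (Bm Bp : Fin nb → ℝ) (ρa ρb : ℝ → ℝ)
    (hμa : Assumption2 μa na Am Ap ρa)
    (hμb : Assumption2 μb nb Bm Bp ρb)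
    (hhata : IsNevanHat μa μhata) (hhatb : IsNevanHat μb μhatb) :
    (∃ (m : ℕ) (Ept : Fin m → ℝ) (gap : Fin m → ℕ),
      m ≤ na - 1 ∧ Function.Injective Ept ∧ Function.Injective gap ∧
      (∀ k, ∃ h : gap k + 1 < na,
        Ept k ∈ Set.Ioo (Ap ⟨gap k, Nat.lt_of_succ_lt h⟩) (Am ⟨gap k + 1, h⟩)) ∧
      (∀ k, stTR μa (Ept k) = 0) ∧
      (∀ k, μhata {Ept k} ≠ 0) ∧
      μhata.singularPart volume = ∑ k : Fin m, μhata {Ept k} • Measure.dirac (Ept k) ∧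
      msupp μhata = msupp μa ∪ Set.range Ept) ∧
    (∃ (m : ℕ) (Ept : Fin m → ℝ) (gap : Fin m → ℕ),
      m ≤ nb - 1 ∧ Function.Injective Ept ∧ Function.Injective gap ∧
      (∀ k, ∃ h : gap k + 1 < nb,
        Ept k ∈ Set.Ioo (Bp ⟨gap k, Nat.lt_of_succ_lt h⟩) (Bm ⟨gap k + 1, h⟩)) ∧
      (∀ k, stTR μb (Ept k) = 0) ∧
      (∀ k, μhatb {Ept k} ≠ 0) ∧
      μhatb.singularPart volume = ∑ k : Fin m, μhatb {Ept k} • Measure.dirac (Ept k) ∧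
      msupp μhatb = msupp μb ∪ Set.range Ept) := by
  exact ⟨nevanlinna_measure_structure_general hμa.isMulticut hhata,
    nevanlinna_measure_structure_general hμb.isMulticut hhatb⟩
end
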